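/- There exist constants C > 0 and N₀ such that for all integers N ≥ N₀ and all integers ℓ, |V_d(ℓ, N + |ℓ|(|ℓ|+1)/2) − p(N)·F(π|ℓ|/√(6N))| ≤ C·N^{−1/10}·p(N)·F(π|ℓ|/√(6N)), where F(α) = (1 + e^{−α})/(1 + e^{−α} + e^{−2α}). In other words, uniformly in ℓ ∈ ℤ as N → ∞, V_d(ℓ, N + |ℓ|(|ℓ|+1)/2) = p(N)·F(π|ℓ|/√(6N))·(1 + O(N^{−1/10})). -/

import Mathlib

open scoped BigOperators

/-- `IsSCC n l k` says that the list `l = (a_1, ..., a_s)` of nonnegative integers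
is a strongly concave composition of `n` with central part at (1-indexed) position `k`:
`a_1 > a_2 > ... > a_{k-1} > a_k < a_{k+1} < ... < a_s` and `a_1 + ... + a_s = n`. -/
def IsSCC (n : ℕ) (l : List ℕ) (k : ℕ) : Prop :=
  1 ≤ k ∧ k ≤ l.length ∧ l.sum = n ∧
  (∀ i j : Fin l.length, (i : ℕ) < j → (j : ℕ) < k → l.get j < l.get i) ∧
  (∀ i j : Fin l.length, k - 1 ≤ (i : ℕ) → (i : ℕ) < j → l.get i < l.get j)

/-- The rank `s - 2k + 1` of a strongly concave composition with `s` parts and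
central part at position `k`. -/
def sccRank (l : List ℕ) (k : ℕ) : ℤ := (l.length : ℤ) - 2 * k + 1

/-- `Vd m n` is the number of strongly concave compositions of `n` with rank `m`. -/
noncomputable def Vd (m : ℤ) (n : ℕ) : ℕ :=
  Set.ncard {p : List ℕ × ℕ | IsSCC n p.1 p.2 ∧ sccRank p.1 p.2 = m}

/-- `VdTotal n` is the total number of strongly concave compositions of `n`. -/
noncomputable def VdTotal (n : ℕ) : ℕ :=
  Set.ncard {p : List ℕ × ℕ | IsSCC n p.1 p.2}

/-- The partition function, extended by `0` to negative integers. -/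
def partitionCount (k : ℤ) : ℕ :=
  if 0 ≤ k then Fintype.card (Nat.Partition k.toNat) else 0

open Real

/-- The limit shape function `F(α) = (1 + e^{-α})/(1 + e^{-α} + e^{-2α})`. -/
noncomputable def Frk (α : ℝ) : ℝ :=
  (1 + Real.exp (-α)) / (1 + Real.exp (-α) + Real.exp (-2 * α))

/-!
Let `m` be the rank and `l = |m|`. A composition of rank `m` and central part `c` is a pair of sets
of `a` and `a + l` integers exceeding `c`. Subtracting staircases turns its generating function into
that of the partitions with Durfee rectangle `a × (a + l)`, and the count becomes the sum over `a`
and `c` of `durfeeCount l a (N - (a + c * (2 * a + l + 1)))`.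

* The recurrence `n p(n) = ∑ σ(j) p(n - j)` and `σ(1) + ⋯ + σ(n) ≈ ζ(2) n ^ 2 / 2` give a discrete
  Riccati equation for the ratios of `p` and its iterated partial sums. Its solutions stay close to
  the equilibrium, whence `p(N - k) ≈ p(N) exp (-t k)` with `t = π / √(6 N)`.
* With `w = exp (-t l)`, the Durfee rectangles of the partitions of `N` concentrate at the width
  `a ≈ x`, where `exp (-t x) (1 + w) = 1`: for other `a` the value at `exp (-t)` of the generating
  function of `durfeeCount l a` is too small.
* Freezing `a = x` in `k = a + c * (2 * a + l + 1)`, the sum over `a` collapses to `p(N - k)`. With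
  `u = exp (-t x) = 1 / (1 + w)` there remains `p(N)` times the geometric series
  `∑ u (u ^ 2 w) ^ c = u / (1 - u ^ 2 w) = (1 + w) / (1 + w + w ^ 2)`.
-/

section QSeries

open Finset PowerSeries

section OrderedSemiring

variable {R : Type*} [CommSemiring R] [PartialOrder R] [IsOrderedRing R] {f g : R⟦X⟧}

lemma coeff_mul_nonneg (hf : ∀ n, 0 ≤ coeff n f) (hg : ∀ n, 0 ≤ coeff n g) (n : ℕ) :
    0 ≤ coeff n (f * g) := by
  rw [coeff_mul]
  exact sum_nonneg fun x _ => mul_nonneg (hf _) (hg _)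

lemma coeff_X_pow_nonneg (m n : ℕ) : 0 ≤ coeff n (X ^ m : R⟦X⟧) := by
  rw [coeff_X_pow]
  split_ifs
  exacts [zero_le_one, le_rfl]

lemma coeff_mul_le_coeff_succ_mul (hf : ∀ n, 0 ≤ coeff n f) (hg : ∀ n, 0 ≤ coeff n g)
    (hmono : ∀ n, coeff n g ≤ coeff (n + 1) g) (n : ℕ) :
    coeff n (f * g) ≤ coeff (n + 1) (f * g) := by
  rw [coeff_mul, coeff_mul, Nat.sum_antidiagonal_succ']
  exact le_add_of_nonneg_of_le (mul_nonneg (hf _) (hg _))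
    (sum_le_sum fun x _ => mul_le_mul_of_nonneg_left (hmono _) (hf _))

end OrderedSemiring

section Field

variable {K : Type*} [Field K]

lemma one_sub_X_pow_mul_inv {m : ℕ} (hm : m ≠ 0) :
    (1 - X ^ m : K⟦X⟧) * (1 - X ^ m)⁻¹ = 1 :=
  PowerSeries.mul_inv_cancel _ (by simp [hm])

lemma coeff_inv_one_sub_X_pow {m : ℕ} (hm : m ≠ 0) (n : ℕ) :
    coeff n (1 - X ^ m : K⟦X⟧)⁻¹ = if m ∣ n then 1 else 0 := by
  suffices (1 - X ^ m : K⟦X⟧)⁻¹ = mk fun n => if m ∣ n then 1 else 0 by rw [this, coeff_mk]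
  symm
  rw [PowerSeries.eq_inv_iff_mul_eq_one (by simp [hm])]
  ext n
  rw [mul_one_sub, map_sub, coeff_mk, coeff_mul_X_pow', coeff_one]
  rcases le_or_gt m n with h | h
  · obtain ⟨d, rfl⟩ := Nat.exists_eq_add_of_le h
    simp [hm]
  · simp [Nat.not_le.2 h, Nat.dvd_iff_mod_eq_zero, Nat.mod_eq_of_lt h]

variable (K) in
/-- The power series `1 / ((1 - q) (1 - q ^ 2) ⋯ (1 - q ^ k))`, which generates the partitions
into parts of size at most `k`. -/
noncomputable def invQFactorial (k : ℕ) : K⟦X⟧ := ∏ i ∈ range k, (1 - X ^ (i + 1))⁻¹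

@[simp]
lemma invQFactorial_zero : invQFactorial K 0 = 1 := by simp [invQFactorial]

lemma invQFactorial_succ (k : ℕ) :
    invQFactorial K (k + 1) = invQFactorial K k * (1 - X ^ (k + 1))⁻¹ :=
  prod_range_succ _ _

lemma invQFactorial_succ_eq_add (k : ℕ) :
    invQFactorial K (k + 1) = X ^ (k + 1) * invQFactorial K (k + 1) + invQFactorial K k := by
  rw [invQFactorial_succ]
  linear_combination invQFactorial K k * one_sub_X_pow_mul_inv (K := K) (Nat.add_one_ne_zero k)

open PowerSeries.WithPiTopology in
lemma coeff_invQFactorial (k n : ℕ) :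
    coeff n (invQFactorial K k) = #(Nat.Partition.restricted n (· ≤ k)) := by
  let : TopologicalSpace K := ⊥
  have : DiscreteTopology K := ⟨rfl⟩
  have hgeom (i : ℕ) : ∑' j : ℕ, (X : K⟦X⟧) ^ ((i + 1) * j) = (1 - X ^ (i + 1))⁻¹ := by
    rw [PowerSeries.eq_inv_iff_mul_eq_one (by simp)]
    simpa only [← pow_mul] using
      tsum_pow_mul_one_sub_of_constantCoeff_eq_zero (f := (X : K⟦X⟧) ^ (i + 1)) (by simp)
  have hfinite := hasProd_prod_of_ne_finset_one (L := .unconditional ℕ)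
    (s := range k) (f := fun i => if i + 1 ≤ k then ∑' j : ℕ, (X : K⟦X⟧) ^ ((i + 1) * j) else 1)
    fun i hi => if_neg (by simpa using hi)
  have hprod : invQFactorial K k
      = ∏ i ∈ range k, if i + 1 ≤ k then ∑' j : ℕ, (X : K⟦X⟧) ^ ((i + 1) * j) else 1 :=
    prod_congr rfl fun i hi => by rw [if_pos (Nat.succ_le_of_lt (Finset.mem_range.1 hi)), hgeom]
  rw [hprod, ← (Nat.Partition.hasProd_powerSeriesMk_card_restricted K (· ≤ k)).unique hfinite,
    coeff_mk]

variable (K) in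
/-- The Gaussian binomial coefficients `[M choose a]_q`, as power series in `q`. -/
noncomputable def gaussBinom : ℕ → ℕ → K⟦X⟧
  | _, 0 => 1
  | 0, _ + 1 => 0
  | M + 1, a + 1 => X ^ (a + 1) * gaussBinom M (a + 1) + gaussBinom M a

@[simp]
lemma gaussBinom_zero_right (M : ℕ) : gaussBinom K M 0 = 1 := by cases M <;> rfl

lemma gaussBinom_succ_succ (M a : ℕ) :
    gaussBinom K (M + 1) (a + 1) = X ^ (a + 1) * gaussBinom K M (a + 1) + gaussBinom K M a :=
  rfl

lemma gaussBinom_eq_zero_of_lt {M a : ℕ} (h : M < a) : gaussBinom K M a = 0 := by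
  induction M generalizing a with
  | zero =>
    obtain ⟨a, rfl⟩ := Nat.exists_eq_succ_of_ne_zero h.ne'
    rfl
  | succ M ih =>
    obtain ⟨a, rfl⟩ := Nat.exists_eq_succ_of_ne_zero (Nat.ne_zero_of_lt h)
    rw [gaussBinom_succ_succ, ih (by omega), ih (by omega), mul_zero, add_zero]

lemma coeff_gaussBinom {M a n : ℕ} (h : n + a ≤ M) :
    coeff n (gaussBinom K M a) = coeff n (invQFactorial K a) := by
  induction M generalizing a n with
  | zero => obtain rfl : a = 0 := by omega
            simp
  | succ M ih =>
    cases a with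
    | zero => simp
    | succ a =>
      rw [gaussBinom_succ_succ, invQFactorial_succ_eq_add, map_add, map_add, coeff_X_pow_mul',
        coeff_X_pow_mul', ih (a := a) (by omega)]
      split_ifs
      · rw [ih (by omega)]
      · rfl

/- Cutting out the Durfee rectangle `a × (a + l)` from a Young diagram with at most `M` rows. -/
lemma sum_durfee_rectangle (M l : ℕ) :
    ∑ a ∈ range (M + 1), X ^ (a * (a + l)) * gaussBinom K M a * invQFactorial K (a + l)
      = invQFactorial K (M + l) := by
  induction M generalizing l with
  | zero => simp
  | succ M ih =>
    let f (a : ℕ) := X ^ ((a + 1) * (a + 1 + l)) * gaussBinom K M a * invQFactorial K (a + 1 + l)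
    let g (a : ℕ) := X ^ (a * (a + l + 1)) * gaussBinom K M a * invQFactorial K (a + l)
    have hlast : g (M + 1) = 0 := by simp [g, gaussBinom_eq_zero_of_lt (K := K) M.lt_succ_self]
    have hright (a : ℕ) : X ^ (a * (a + (l + 1))) * gaussBinom K M a
        * invQFactorial K (a + (l + 1)) = f a + g a := by
      have h := invQFactorial_succ_eq_add (K := K) (a + l)
      simp only [f, g, show a + 1 + l = a + l + 1 by ring, ← add_assoc]
      linear_combination (exp := 1) (X ^ (a * (a + l + 1)) * gaussBinom K M a) * h
    have hleft (a : ℕ) : X ^ ((a + 1) * (a + 1 + l)) * gaussBinom K (M + 1) (a + 1)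
        * invQFactorial K (a + 1 + l) = f a + g (a + 1) := by
      simp only [f, g, gaussBinom_succ_succ]
      ring
    calc _ = ∑ a ∈ range (M + 1), (f a + g (a + 1)) + g 0 := by
          rw [sum_range_succ', sum_congr rfl fun a _ => hleft a]
          simp [g]
      _ = ∑ a ∈ range (M + 1), (f a + g a) := by
          rw [sum_add_distrib, add_assoc, ← sum_range_succ' g, sum_range_succ g, hlast, add_zero,
            sum_add_distrib]
      _ = invQFactorial K (M + 1 + l) := by
          rw [← sum_congr rfl fun a _ => hright a, ih, add_assoc, add_comm 1]

end Field

lemma coeff_invQFactorial_nonneg (k n : ℕ) : 0 ≤ coeff n (invQFactorial ℝ k) := by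
  rw [coeff_invQFactorial]
  positivity

lemma coeff_invQFactorial_le_succ {k : ℕ} (hk : 1 ≤ k) (n : ℕ) :
    coeff n (invQFactorial ℝ k) ≤ coeff (n + 1) (invQFactorial ℝ k) := by
  have hnonneg (m n : ℕ) : 0 ≤ coeff n (1 - X ^ (m + 1) : ℝ⟦X⟧)⁻¹ := by
    rw [coeff_inv_one_sub_X_pow m.succ_ne_zero]
    positivity
  induction k, hk using Nat.le_induction generalizing n with
  | base =>
    simp only [invQFactorial_succ, invQFactorial_zero, one_mul,
      coeff_inv_one_sub_X_pow (zero_add 1 ▸ one_ne_zero), zero_add, one_dvd]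
    rfl
  | succ k _ ih =>
    rw [invQFactorial_succ, mul_comm]
    exact coeff_mul_le_coeff_succ_mul (hnonneg k) (coeff_invQFactorial_nonneg k) ih n

/-- The number `p(n)` of partitions of `n`, as a real number. -/
noncomputable def numPartitions (n : ℕ) : ℝ := Fintype.card (Nat.Partition n)

lemma coeff_invQFactorial_of_le {k n : ℕ} (h : n ≤ k) :
    coeff n (invQFactorial ℝ k) = numPartitions n := by
  rw [coeff_invQFactorial, numPartitions, Nat.Partition.restricted, filter_true_of_mem, card_univ]
  exact fun x _ i hi => (Nat.Partition.le_of_mem_parts hi).trans h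

lemma numPartitions_nonneg (n : ℕ) : 0 ≤ numPartitions n := Nat.cast_nonneg _

/-- The number of partitions of `n` whose Durfee rectangle, the largest rectangle of the form
`a × (a + l)` inside the Young diagram, has `a` rows. -/
noncomputable def durfeeCount (l a n : ℕ) : ℝ :=
  coeff n (X ^ (a * (a + l)) * (invQFactorial ℝ a * invQFactorial ℝ (a + l)))

lemma durfeeCount_nonneg (l a n : ℕ) : 0 ≤ durfeeCount l a n :=
  coeff_mul_nonneg (coeff_X_pow_nonneg _)
    (coeff_mul_nonneg (coeff_invQFactorial_nonneg _) (coeff_invQFactorial_nonneg _)) n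

lemma durfeeCount_mono {l a : ℕ} (h : 1 ≤ a + l) : Monotone (durfeeCount l a) := by
  refine monotone_nat_of_le_succ fun n => ?_
  rw [durfeeCount, durfeeCount, ← mul_assoc]
  exact coeff_mul_le_coeff_succ_mul
    (coeff_mul_nonneg (coeff_X_pow_nonneg _) (coeff_invQFactorial_nonneg _))
    (coeff_invQFactorial_nonneg _) (coeff_invQFactorial_le_succ h) n

lemma le_mul_add_self (a l : ℕ) : a ≤ a * (a + l) := by nlinarith [Nat.le_mul_self a]

lemma durfeeCount_eq_zero_of_lt {l a n : ℕ} (h : n < a) : durfeeCount l a n = 0 := by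
  rw [durfeeCount, coeff_X_pow_mul', if_neg (not_le.2 (h.trans_le (le_mul_add_self a l)))]

lemma coeff_durfee_eq_durfeeCount {l a n M : ℕ} (h : n + a ≤ M) :
    coeff n (X ^ (a * (a + l)) * gaussBinom ℝ M a * invQFactorial ℝ (a + l))
      = durfeeCount l a n := by
  rw [durfeeCount, mul_assoc, coeff_X_pow_mul', coeff_X_pow_mul']
  split_ifs
  · rw [coeff_mul, coeff_mul]
    refine sum_congr rfl fun x hx => ?_
    rw [coeff_gaussBinom (by have := mem_antidiagonal.1 hx; omega)]
  · rfl

lemma coeff_durfee_eq_zero {l a n : ℕ} (M : ℕ) (h : n < a) :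
    coeff n (X ^ (a * (a + l)) * gaussBinom ℝ M a * invQFactorial ℝ (a + l)) = 0 := by
  rw [mul_assoc, coeff_X_pow_mul', if_neg (not_le.2 (h.trans_le (le_mul_add_self a l)))]

lemma sum_durfeeCount (l : ℕ) {n K : ℕ} (hK : n ≤ K) :
    ∑ a ∈ range (K + 1), durfeeCount l a n = numPartitions n := by
  have hsub : range (n + 1) ⊆ range (K + 1) := range_subset_range.2 (by omega)
  have hsub' : range (n + 1) ⊆ range (2 * n + 1) := range_subset_range.2 (by omega)
  calc ∑ a ∈ range (K + 1), durfeeCount l a n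
      = ∑ a ∈ range (n + 1), durfeeCount l a n :=
        (sum_subset hsub fun a _ ha => durfeeCount_eq_zero_of_lt (by simpa using ha)).symm
    _ = ∑ a ∈ range (n + 1),
          coeff n (X ^ (a * (a + l)) * gaussBinom ℝ (2 * n) a * invQFactorial ℝ (a + l)) :=
        sum_congr rfl fun a ha =>
          (coeff_durfee_eq_durfeeCount (by have := Finset.mem_range.1 ha; omega)).symm
    _ = coeff n (invQFactorial ℝ (2 * n + l)) := by
        rw [← sum_durfee_rectangle, map_sum]
        exact sum_subset hsub' fun a _ ha => coeff_durfee_eq_zero _ (by simpa using ha)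
    _ = numPartitions n := coeff_invQFactorial_of_le (by omega)

lemma durfeeCount_le_numPartitions (l a n : ℕ) : durfeeCount l a n ≤ numPartitions n := by
  rcases lt_or_ge n a with h | h
  · exact (durfeeCount_eq_zero_of_lt h).trans_le (numPartitions_nonneg n)
  · rw [← sum_durfeeCount l le_rfl]
    exact single_le_sum (f := fun a => durfeeCount l a n) (fun i _ => durfeeCount_nonneg l i n)
      (Finset.mem_range.2 (by omega))

end QSeries

section ConcaveCompositions

open Finset PowerSeries

lemma isSCC_iff_pairwise {n k : ℕ} {l : List ℕ} :
    IsSCC n l k ↔ 1 ≤ k ∧ k ≤ l.length ∧ l.sum = n ∧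
      (l.take k).Pairwise (· > ·) ∧ (l.drop (k - 1)).Pairwise (· < ·) := by
  simp only [IsSCC, List.pairwise_iff_getElem, List.getElem_take, List.getElem_drop,
    List.length_take, List.length_drop, List.get_eq_getElem]
  refine and_congr_right fun _ => and_congr_right fun _ => and_congr_right fun _ =>
    and_congr ⟨fun h i j _ hj hij => ?_, fun h i j hij hj => ?_⟩
      ⟨fun h i j _ hj hij => ?_, fun h i j hi hij => ?_⟩
  · exact h ⟨i, by omega⟩ ⟨j, by omega⟩ hij (by simp only; omega)
  · exact h i j (by omega) (by omega) hij
  · exact h ⟨k - 1 + i, by omega⟩ ⟨k - 1 + j, by omega⟩ (by simp) (by simp only; omega)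
  · have := h (i - (k - 1)) (j - (k - 1)) (by omega) (by omega) (by omega)
    simpa only [Nat.add_sub_cancel' hi, Nat.add_sub_cancel' (hi.trans hij.le)] using this

lemma isSCC_append_cons_iff {n c : ℕ} {l₁ l₂ : List ℕ} :
    IsSCC n (l₁ ++ c :: l₂) (l₁.length + 1) ↔
      l₁.sum + c + l₂.sum = n ∧ (l₁.Pairwise (· > ·) ∧ ∀ a ∈ l₁, c < a) ∧
        (∀ b ∈ l₂, c < b) ∧ l₂.Pairwise (· < ·) := by
  rw [isSCC_iff_pairwise]
  simp [List.take_append, List.take_of_length_le, List.pairwise_append, add_assoc]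

/-- Strongly concave compositions of `n` of rank `m`, recorded as the central part together with
the set of parts to the left and the set of parts to the right of it. -/
def concaveTriples (m : ℤ) (n : ℕ) : Set (ℕ × Finset ℕ × Finset ℕ) :=
  {x | (∀ y ∈ x.2.1, x.1 < y) ∧ (∀ y ∈ x.2.2, x.1 < y) ∧
    x.1 + x.2.1.sum id + x.2.2.sum id = n ∧ (#x.2.2 : ℤ) - #x.2.1 = m}

lemma sum_sort (s : Finset ℕ) (r : ℕ → ℕ → Prop) [DecidableRel r] [IsTrans ℕ r] [Std.Antisymm r]
    [Std.Total r] : (s.sort r).sum = s.sum id := by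
  rw [← Multiset.sum_coe, Finset.sort_eq]
  exact s.sum_val

/-- The composition with central part `x.1`, left parts `x.2.1` and right parts `x.2.2`, together
with the position of its central part. -/
def compositionOfTriple (x : ℕ × Finset ℕ × Finset ℕ) : List ℕ × ℕ :=
  (x.2.1.sort (· ≥ ·) ++ x.1 :: x.2.2.sort (· ≤ ·), #x.2.1 + 1)

lemma compositionOfTriple_injective : Function.Injective compositionOfTriple := by
  rintro ⟨c, A, B⟩ ⟨c', A', B'⟩ h
  obtain ⟨hlist, hcard⟩ := Prod.mk.inj h
  obtain ⟨hA, hcB⟩ := List.append_inj hlist (by simpa using hcard)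
  obtain ⟨hc, hB⟩ := List.cons.inj hcB
  replace hA := congrArg List.toFinset hA
  replace hB := congrArg List.toFinset hB
  simp only [sort_toFinset] at hA hB
  exact Prod.ext hc (Prod.ext hA hB)

lemma compositionOfTriple_mem_iff {m : ℤ} {n : ℕ} {x : ℕ × Finset ℕ × Finset ℕ} :
    (IsSCC n (compositionOfTriple x).1 (compositionOfTriple x).2 ∧
      sccRank (compositionOfTriple x).1 (compositionOfTriple x).2 = m)
      ↔ x ∈ concaveTriples m n := by
  obtain ⟨c, A, B⟩ := x
  have hscc := isSCC_append_cons_iff (n := n) (c := c) (l₁ := A.sort (· ≥ ·))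
    (l₂ := B.sort (· ≤ ·))
  rw [length_sort] at hscc
  simp only [compositionOfTriple, hscc, sum_sort, (sortedGT_sort A).pairwise,
    (sortedLT_sort B).pairwise, mem_sort, true_and, and_true, sccRank, List.length_append,
    List.length_cons, length_sort, concaveTriples, Set.mem_ofPred_eq]
  constructor
  · rintro ⟨⟨hsum, hA, hB⟩, hrank⟩
    exact ⟨hA, hB, by omega, by omega⟩
  · rintro ⟨hA, hB, hsum, hrank⟩
    exact ⟨⟨by omega, hA, hB⟩, by omega⟩

lemma exists_compositionOfTriple_eq {n k : ℕ} {l : List ℕ} (h : IsSCC n l k) :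
    ∃ x, compositionOfTriple x = (l, k) := by
  obtain ⟨j, rfl⟩ := Nat.exists_eq_add_of_le' h.1
  have hj : j < l.length := h.2.1
  obtain ⟨l₁, c, l₂, rfl, rfl⟩ : ∃ l₁ c l₂, l₁.length = j ∧ l = l₁ ++ c :: l₂ :=
    ⟨l.take j, l[j], l.drop (j + 1), by simp [hj.le], by simp⟩
  obtain ⟨-, ⟨hpair₁, -⟩, -, hpair₂⟩ := isSCC_append_cons_iff.1 h
  have hnodup₁ : l₁.Nodup := hpair₁.imp ne_of_gt
  have hnodup₂ : l₂.Nodup := hpair₂.imp ne_of_lt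
  refine ⟨(c, l₁.toFinset, l₂.toFinset), ?_⟩
  rw [compositionOfTriple, (List.toFinset_sort (· ≥ ·) hnodup₁).2 (hpair₁.imp le_of_lt),
    (List.toFinset_sort (· ≤ ·) hnodup₂).2 (hpair₂.imp le_of_lt),
    List.toFinset_card_of_nodup hnodup₁]

lemma Vd_eq_ncard_concaveTriples (m : ℤ) (n : ℕ) : Vd m n = (concaveTriples m n).ncard := by
  rw [Vd, ← Set.ncard_image_of_injective _ compositionOfTriple_injective]
  congr 1
  ext ⟨l, k⟩
  constructor
  · rintro ⟨hscc, hrank⟩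
    obtain ⟨x, hx⟩ := exists_compositionOfTriple_eq hscc
    exact ⟨x, compositionOfTriple_mem_iff.1 (by rw [hx]; exact ⟨hscc, hrank⟩), hx⟩
  · rintro ⟨x, hx, heq⟩
    have := compositionOfTriple_mem_iff.2 hx
    rwa [heq] at this

lemma ncard_concaveTriples_neg (m : ℤ) (n : ℕ) :
    (concaveTriples (-m) n).ncard = (concaveTriples m n).ncard := by
  rw [← Set.ncard_image_of_injective _ (f := fun x => (x.1, x.2.2, x.2.1))
    fun x y h => by simp_all [Prod.ext_iff]]
  congr 1
  ext ⟨c, A, B⟩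
  constructor
  · rintro ⟨⟨c', B', A'⟩, ⟨hB, hA, hsum, hrank⟩, h⟩
    obtain ⟨rfl, rfl, rfl⟩ := by simpa only [Prod.mk.injEq] using h
    exact ⟨hA, hB, by simp only at *; omega, by simp only at *; omega⟩
  · rintro ⟨hA, hB, hsum, hrank⟩
    exact ⟨(c, B, A), ⟨hB, hA, by simp only at *; omega, by simp only at *; omega⟩, rfl⟩

lemma Vd_eq_ncard_concaveTriples_natAbs (m : ℤ) (n : ℕ) :
    Vd m n = (concaveTriples m.natAbs n).ncard := by
  rw [Vd_eq_ncard_concaveTriples]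
  rcases m.natAbs_eq with h | h
  · rw [← h]
  · rw [← ncard_concaveTriples_neg m.natAbs, ← h]

/-- The sets of `a` natural numbers exceeding `c` with sum `s`. -/
def finsetsAbove (c a s : ℕ) : Finset (Finset ℕ) :=
  {A ∈ (range (s + 1)).powersetCard a | (∀ x ∈ A, c < x) ∧ A.sum id = s}

lemma mem_finsetsAbove {c a s : ℕ} {A : Finset ℕ} :
    A ∈ finsetsAbove c a s ↔ #A = a ∧ (∀ x ∈ A, c < x) ∧ A.sum id = s := by
  rw [finsetsAbove, mem_filter, mem_powersetCard]
  refine ⟨fun ⟨⟨_, hcard⟩, h⟩ => ⟨hcard, h⟩, fun ⟨hcard, hA, hsum⟩ => ⟨⟨fun x hx => ?_, hcard⟩,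
    hA, hsum⟩⟩
  exact Finset.mem_range_succ_iff.2 (hsum ▸ single_le_sum_of_canonicallyOrdered (f := id) hx)

lemma le_of_mem_finsetsAbove {c a s : ℕ} {A : Finset ℕ} (h : A ∈ finsetsAbove c a s) : a ≤ s := by
  obtain ⟨rfl, hA, rfl⟩ := mem_finsetsAbove.1 h
  simpa using card_nsmul_le_sum A id 1 fun x hx => Nat.one_le_of_lt (hA x hx)

lemma finsetsAbove_eq_empty {c a s : ℕ} (h : s < a) : finsetsAbove c a s = ∅ :=
  eq_empty_of_forall_notMem fun _ hA => h.not_ge (le_of_mem_finsetsAbove hA)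

lemma map_succ_mem_finsetsAbove {c a s : ℕ} {A : Finset ℕ} :
    A.map (addRightEmbedding 1) ∈ finsetsAbove (c + 1) a (s + a) ↔ A ∈ finsetsAbove c a s := by
  simp only [mem_finsetsAbove, card_map, forall_mem_map, addRightEmbedding_apply,
    add_lt_add_iff_right, sum_map, id, sum_add_distrib, sum_const, smul_eq_mul, mul_one]
  refine and_congr_right fun hcard => and_congr_right fun _ => ?_
  rw [hcard, add_left_inj]

lemma card_finsetsAbove_succ_add (c a s : ℕ) :
    #(finsetsAbove (c + 1) a (s + a)) = #(finsetsAbove c a s) := by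
  symm
  refine card_bij (fun A _ => A.map (addRightEmbedding 1))
    (fun A hA => map_succ_mem_finsetsAbove.2 hA) (fun A _ B _ h => map_injective _ h)
    fun A hA => ?_
  have hpreimage : (A.image Nat.pred).map (addRightEmbedding 1) = A := by
    rw [map_eq_image, image_image]
    refine (image_congr fun x hx => ?_).trans image_id
    exact Nat.sub_add_cancel (Nat.one_le_of_lt ((mem_finsetsAbove.1 hA).2.1 x hx))
  exact ⟨A.image Nat.pred, map_succ_mem_finsetsAbove.1 (hpreimage.symm ▸ hA), hpreimage⟩

lemma filter_notMem_finsetsAbove (c a s : ℕ) :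
    {A ∈ finsetsAbove c a s | c + 1 ∉ A} = finsetsAbove (c + 1) a s := by
  ext A
  simp only [mem_filter, mem_finsetsAbove]
  constructor
  · rintro ⟨⟨hcard, hA, hsum⟩, hc⟩
    exact ⟨hcard, fun x hx => lt_of_le_of_ne (hA x hx) fun h => hc (h ▸ hx), hsum⟩
  · rintro ⟨hcard, hA, hsum⟩
    exact ⟨⟨hcard, fun x hx => (Nat.lt_succ_self c).trans (hA x hx), hsum⟩,
      fun hc => (hA _ hc).false⟩

lemma card_filter_mem_finsetsAbove (c a s : ℕ) :
    #{A ∈ finsetsAbove c (a + 1) (s + (c + 1)) | c + 1 ∈ A} = #(finsetsAbove (c + 1) a s) := by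
  refine card_nbij' (·.erase (c + 1)) (insert (c + 1)) (fun A hA => ?_) (fun B hB => ?_)
    (fun A hA => insert_erase (mem_filter.1 hA).2) (fun B hB => erase_insert ?_)
  · obtain ⟨hA, hc⟩ := mem_filter.1 hA
    obtain ⟨hcard, hgt, hsum⟩ := mem_finsetsAbove.1 hA
    rw [← sum_erase_add A id hc] at hsum
    refine mem_finsetsAbove.2 ⟨by rw [card_erase_of_mem hc, hcard, Nat.add_sub_cancel],
      fun x hx => ?_, Nat.add_right_cancel hsum⟩
    exact lt_of_le_of_ne (hgt x (mem_of_mem_erase hx)) (ne_of_mem_erase hx).symm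
  · obtain ⟨hcard, hgt, hsum⟩ := mem_finsetsAbove.1 hB
    have hc : c + 1 ∉ B := fun hc => (hgt _ hc).false
    refine mem_filter.2 ⟨mem_finsetsAbove.2 ⟨by rw [card_insert_of_notMem hc, hcard], ?_, ?_⟩,
      mem_insert_self _ _⟩
    · exact (forall_mem_insert ..).2
        ⟨c.lt_succ_self, fun x hx => c.lt_succ_self.trans (hgt x hx)⟩
    · rw [sum_insert hc, hsum, id, add_comm]
  · exact fun hc => ((mem_finsetsAbove.1 hB).2.1 _ hc).false

lemma filter_mem_finsetsAbove_eq_empty {c a s : ℕ} (h : s < c + 1) :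
    {A ∈ finsetsAbove c a s | c + 1 ∈ A} = ∅ := by
  refine filter_eq_empty_iff.2 fun A hA hc => h.not_ge ?_
  obtain ⟨-, -, rfl⟩ := mem_finsetsAbove.1 hA
  exact single_le_sum_of_canonicallyOrdered (f := id) hc

section GeneratingFunction

variable (K : Type*) [Field K]

/-- The generating function of the sets of `a` natural numbers exceeding `c` by their sum. -/
noncomputable def finsetsAboveSeries (c a : ℕ) : K⟦X⟧ :=
  PowerSeries.mk fun s => (#(finsetsAbove c a s) : K)

lemma finsetsAboveSeries_succ_left (c a : ℕ) :
    finsetsAboveSeries K (c + 1) a = X ^ a * finsetsAboveSeries K c a := by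
  ext s
  rw [coeff_X_pow_mul', finsetsAboveSeries, finsetsAboveSeries, coeff_mk]
  split_ifs with h
  · obtain ⟨s, rfl⟩ := Nat.exists_eq_add_of_le' h
    rw [card_finsetsAbove_succ_add, coeff_mk, Nat.add_sub_cancel]
  · rw [finsetsAbove_eq_empty (not_le.1 h), card_empty, Nat.cast_zero]

lemma finsetsAboveSeries_succ_right (c a : ℕ) :
    finsetsAboveSeries K c (a + 1)
      = finsetsAboveSeries K (c + 1) (a + 1) + X ^ (c + 1) * finsetsAboveSeries K (c + 1) a := by
  ext s
  simp only [finsetsAboveSeries, map_add, coeff_X_pow_mul', coeff_mk]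
  rw [← card_filter_add_card_filter_not (s := finsetsAbove c (a + 1) s) (c + 1 ∉ ·),
    filter_notMem_finsetsAbove, Nat.cast_add]
  simp only [not_not]
  split_ifs with h
  · obtain ⟨s, rfl⟩ := Nat.exists_eq_add_of_le' h
    rw [card_filter_mem_finsetsAbove, Nat.add_sub_cancel]
  · rw [filter_mem_finsetsAbove_eq_empty (not_le.1 h), card_empty, Nat.cast_zero]

lemma finsetsAbove_zero (c s : ℕ) : finsetsAbove c 0 s = if s = 0 then {∅} else ∅ := by
  ext A
  rw [mem_finsetsAbove, card_eq_zero]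
  split_ifs with h
  · rw [mem_singleton]
    exact ⟨And.left, fun hA => by simp [hA, h]⟩
  · simp only [notMem_empty, iff_false, not_and]
    rintro rfl - hsum
    exact h hsum.symm

lemma finsetsAboveSeries_eq (c a : ℕ) :
    finsetsAboveSeries K c a = X ^ (c * a + a * (a + 1) / 2) * invQFactorial K a := by
  induction a with
  | zero =>
    ext s
    simp only [finsetsAboveSeries, coeff_mk, finsetsAbove_zero, mul_zero, zero_mul, Nat.zero_div,
      add_zero, pow_zero, invQFactorial_zero, mul_one, coeff_one]
    split_ifs <;> simp
  | succ a ih =>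
    have hrec := finsetsAboveSeries_succ_right K c a
    rw [finsetsAboveSeries_succ_left, finsetsAboveSeries_succ_left, ih] at hrec
    have hinv := one_sub_X_pow_mul_inv (K := K) (Nat.add_one_ne_zero a)
    have hexp : c * (a + 1) + (a + 1) * (a + 1 + 1) / 2
        = c + 1 + a + (c * a + a * (a + 1) / 2) := by
      rw [show (a + 1) * (a + 1 + 1) = a * (a + 1) + (a + 1) * 2 by ring,
        Nat.add_mul_div_right _ _ two_pos]
      ring
    rw [hexp, invQFactorial_succ, pow_add, pow_add]
    linear_combination (1 - X ^ (a + 1) : K⟦X⟧)⁻¹ * hrec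
      - finsetsAboveSeries K c (a + 1) * hinv

end GeneratingFunction

/-- `durfeeCount l a (N - k)`, read as `0` when `N < k`. -/
noncomputable def durfeeCountSub (l a N k : ℕ) : ℝ := if k ≤ N then durfeeCount l a (N - k) else 0

lemma durfeeCountSub_eq_zero_of_lt (l a : ℕ) {N k : ℕ} (h : N < k) : durfeeCountSub l a N k = 0 :=
  if_neg h.not_ge

lemma ncard_concaveTriples (l n : ℕ) :
    (concaveTriples l n).ncard = ∑ a ∈ range (n + 1), ∑ c ∈ range (n + 1),
      ∑ s ∈ antidiagonal (n - c), #(finsetsAbove c a s.1) * #(finsetsAbove c (a + l) s.2) := by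
  let S : Finset (Σ _ : ℕ, Σ _ : ℕ, Σ _ : ℕ × ℕ, Finset ℕ × Finset ℕ) :=
    (range (n + 1)).sigma fun a => (range (n + 1)).sigma fun c =>
      (antidiagonal (n - c)).sigma fun s => finsetsAbove c a s.1 ×ˢ finsetsAbove c (a + l) s.2
  have hmem (a c s₁ s₂ : ℕ) (A B : Finset ℕ) : (⟨a, c, (s₁, s₂), A, B⟩ : Sigma _) ∈ S ↔
      a ≤ n ∧ c ≤ n ∧ s₁ + s₂ = n - c ∧ (#A = a ∧ (∀ x ∈ A, c < x) ∧ A.sum id = s₁) ∧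
        #B = a + l ∧ (∀ x ∈ B, c < x) ∧ B.sum id = s₂ := by
    simp only [S, mem_sigma, Finset.mem_range_succ_iff, HasAntidiagonal.mem_antidiagonal,
      mem_product, mem_finsetsAbove]
  have hcard : #S = ∑ a ∈ range (n + 1), ∑ c ∈ range (n + 1), ∑ s ∈ antidiagonal (n - c),
      #(finsetsAbove c a s.1) * #(finsetsAbove c (a + l) s.2) := by
    simp only [S, card_sigma, card_product]
  rw [← hcard, ← Set.ncard_coe_finset]
  symm
  refine Set.ncard_congr (fun x _ => (x.2.1, x.2.2.2.1, x.2.2.2.2)) ?_ ?_ ?_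
  · rintro ⟨a, c, ⟨s₁, s₂⟩, A, B⟩ hx
    obtain ⟨-, hc, hsum, ⟨hA, hcA, hsA⟩, hB, hcB, hsB⟩ := (hmem ..).1 hx
    exact ⟨hcA, hcB, by simp only; omega, by simp only; omega⟩
  · rintro ⟨a, c, ⟨s₁, s₂⟩, A, B⟩ ⟨a', c', ⟨s₁', s₂'⟩, A', B'⟩ hx hx' h
    obtain ⟨-, -, -, ⟨rfl, -, rfl⟩, -, -, rfl⟩ := (hmem ..).1 hx
    obtain ⟨-, -, -, ⟨rfl, -, rfl⟩, -, -, rfl⟩ := (hmem ..).1 hx'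
    obtain ⟨rfl, rfl, rfl⟩ := by simpa only [Prod.mk.injEq] using h
    rfl
  · rintro ⟨c, A, B⟩ ⟨hA, hB, hsum, hrank⟩
    simp only at hA hB hsum hrank
    have hcard_le := le_of_mem_finsetsAbove (mem_finsetsAbove.2 ⟨rfl, hA, rfl⟩)
    exact ⟨⟨#A, c, (A.sum id, B.sum id), A, B⟩, (hmem ..).2 ⟨by omega, by omega, by omega,
      ⟨rfl, hA, rfl⟩, by omega, hB, rfl⟩, rfl⟩

lemma finsetsAbove_exponent_add (a c l : ℕ) :
    c * a + a * (a + 1) / 2 + (c * (a + l) + (a + l) * (a + l + 1) / 2) + c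
      = a + c * (2 * a + l + 1) + a * (a + l) + l * (l + 1) / 2 := by
  obtain ⟨u, hu⟩ := (Nat.even_mul_succ_self a).two_dvd
  obtain ⟨v, hv⟩ := (Nat.even_mul_succ_self l).two_dvd
  have huv : (a + l) * (a + l + 1) = 2 * (u + v + a * l) := by linarith
  rw [huv, hu, hv]
  simp only [Nat.mul_div_cancel_left _ two_pos]
  linarith

lemma sum_antidiagonal_card_finsetsAbove {l a c N : ℕ} (hc : c ≤ N + l * (l + 1) / 2) :
    ∑ s ∈ antidiagonal (N + l * (l + 1) / 2 - c),
      (#(finsetsAbove c a s.1) * #(finsetsAbove c (a + l) s.2) : ℝ)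
      = durfeeCountSub l a N (a + c * (2 * a + l + 1)) := by
  set z := l * (l + 1) / 2
  set g := invQFactorial ℝ a * invQFactorial ℝ (a + l) with hg
  calc _ = coeff (N + z - c) (finsetsAboveSeries ℝ c a * finsetsAboveSeries ℝ c (a + l)) := by
        simp only [finsetsAboveSeries, coeff_mul, coeff_mk]
    _ = coeff (N + z - c) (X ^ (c * a + a * (a + 1) / 2
          + (c * (a + l) + (a + l) * (a + l + 1) / 2)) * g) := by
        rw [finsetsAboveSeries_eq, finsetsAboveSeries_eq, hg, pow_add]
        ring_nf
    _ = coeff (N + z) (X ^ z * (X ^ (a + c * (2 * a + l + 1)) * (X ^ (a * (a + l)) * g))) := by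
        rw [← coeff_X_pow_mul _ c, Nat.sub_add_cancel hc, ← mul_assoc, ← pow_add, add_comm c,
          finsetsAbove_exponent_add]
        simp only [pow_add, z]
        ring_nf
    _ = durfeeCountSub l a N (a + c * (2 * a + l + 1)) := by
        rw [coeff_X_pow_mul, coeff_X_pow_mul']
        rfl

theorem Vd_eq_sum_durfeeCountSub (m : ℤ) (N : ℕ) :
    (Vd m (N + m.natAbs * (m.natAbs + 1) / 2) : ℝ) = ∑ a ∈ range (N + 1), ∑ c ∈ range (N + 1),
      durfeeCountSub m.natAbs a N (a + c * (2 * a + m.natAbs + 1)) := by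
  rw [Vd_eq_ncard_concaveTriples_natAbs, ncard_concaveTriples]
  generalize m.natAbs = l
  set n := N + l * (l + 1) / 2
  have hsub : range (N + 1) ⊆ range (n + 1) := range_subset_range.2 (by omega)
  have hzero (a c : ℕ) (h : N < a ∨ N < c) :
      durfeeCountSub l a N (a + c * (2 * a + l + 1)) = 0 :=
    durfeeCountSub_eq_zero_of_lt l a <| h.elim (fun h => by omega) fun h => by nlinarith
  push_cast
  calc _ = ∑ a ∈ range (n + 1), ∑ c ∈ range (n + 1),
          durfeeCountSub l a N (a + c * (2 * a + l + 1)) :=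
        sum_congr rfl fun a _ => sum_congr rfl fun c hc =>
          sum_antidiagonal_card_finsetsAbove (mem_range_succ_iff.1 hc)
    _ = ∑ a ∈ range (n + 1), ∑ c ∈ range (N + 1),
          durfeeCountSub l a N (a + c * (2 * a + l + 1)) :=
        sum_congr rfl fun a _ => (sum_subset hsub fun c _ hc =>
          hzero a c (.inr (by simpa using hc))).symm
    _ = _ := (sum_subset hsub fun a _ ha => sum_eq_zero fun c _ =>
        hzero a c (.inl (by simpa using ha))).symm

end ConcaveCompositions

section DivisorSums

open Finset PowerSeries

section PartialSums

variable {R : Type*} [CommRing R]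

lemma mk_sum_range_succ (f : ℕ → R) :
    (PowerSeries.mk fun n => ∑ k ∈ range (n + 1), f k) = PowerSeries.mk 1 * PowerSeries.mk f := by
  ext n
  rw [mul_comm, coeff_mul, Nat.sum_antidiagonal_eq_sum_range_succ_mk]
  simp

lemma mk_sum_range (f : ℕ → R) :
    (PowerSeries.mk fun n => ∑ k ∈ range n, f k)
      = X * (PowerSeries.mk 1 * PowerSeries.mk f) := by
  rw [← mk_sum_range_succ]
  ext n
  cases n <;> simp [coeff_succ_X_mul]

variable [PartialOrder R] [IsOrderedRing R]

lemma coeff_one_sub_X_mul_mk_nonneg {f : ℕ → R} (h0 : 0 ≤ f 0) (hf : Monotone f) (n : ℕ) :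
    0 ≤ coeff n ((1 - X) * PowerSeries.mk f) := by
  cases n with
  | zero => simpa [sub_mul]
  | succ n => simpa [sub_mul, coeff_succ_X_mul] using hf n.le_succ

end PartialSums

lemma abs_coeff_mul_mk_le {f : ℝ⟦X⟧} (hf : ∀ n, 0 ≤ coeff n f) {u v : ℕ → ℝ} {n : ℕ}
    (huv : ∀ k ≤ n, |u k| ≤ v k) :
    |coeff n (f * PowerSeries.mk u)| ≤ coeff n (f * PowerSeries.mk v) := by
  simp only [coeff_mul, coeff_mk]
  refine (abs_sum_le_sum_abs _ _).trans (sum_le_sum fun x hx => ?_)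
  rw [abs_mul, abs_of_nonneg (hf _)]
  exact mul_le_mul_of_nonneg_left (huv _ (Finset.HasAntidiagonal.antidiagonal.snd_le hx)) (hf _)

lemma X_mul_derivative_invQFactorial {K : Type*} [Field K] (k : ℕ) :
    X * derivative (R := K) (invQFactorial K k) = invQFactorial K k *
      ∑ m ∈ range k, ((m + 1 : ℕ) : K⟦X⟧) * (X ^ (m + 1) * (1 - X ^ (m + 1))⁻¹) := by
  induction k with
  | zero => simp
  | succ k ih =>
    rw [sum_range_succ, invQFactorial_succ, Derivation.leibniz, PowerSeries.derivative_inv',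
      map_sub, derivative_one, PowerSeries.derivative_pow, derivative_X]
    simp only [smul_eq_mul, Nat.add_sub_cancel]
    generalize (1 - X ^ (k + 1) : K⟦X⟧)⁻¹ = I at *
    linear_combination I * ih

lemma coeff_natCast_mul_X_pow_mul_inv {K : Type*} [Field K] {d : ℕ} (hd : d ≠ 0) (k : ℕ) :
    coeff k ((d : K⟦X⟧) * (X ^ d * (1 - X ^ d)⁻¹)) = if d ∈ k.divisors then (d : K) else 0 := by
  rw [← map_natCast (C : K →+* K⟦X⟧), coeff_C_mul, coeff_X_pow_mul']
  simp only [Nat.mem_divisors]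
  by_cases h : d ≤ k
  · obtain ⟨j, rfl⟩ := Nat.exists_eq_add_of_le h
    simp [coeff_inv_one_sub_X_pow hd, hd]
  · rw [if_neg h, if_neg fun hdvd => h (Nat.le_of_dvd (Nat.pos_of_ne_zero hdvd.2) hdvd.1), mul_zero]

lemma coeff_sum_X_pow_mul_inv {K : Type*} [Field K] {n k : ℕ} (h : k ≤ n) :
    coeff (R := K) k (∑ m ∈ range n, ((m + 1 : ℕ) : K⟦X⟧) * (X ^ (m + 1) * (1 - X ^ (m + 1))⁻¹))
      = ArithmeticFunction.sigma 1 k := by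
  have hdiv : k.divisors ⊆ Ico 1 (n + 1) := fun d hd =>
    mem_Ico.2 ⟨Nat.pos_of_mem_divisors hd, Nat.lt_succ_of_le ((Nat.divisor_le hd).trans h)⟩
  simp only [map_sum, coeff_natCast_mul_X_pow_mul_inv (Nat.add_one_ne_zero _)]
  rw [range_eq_Ico, sum_Ico_add' (fun d => if d ∈ k.divisors then (d : K) else 0) 0 n 1, zero_add,
    sum_ite_mem, inter_eq_right.2 hdiv, ArithmeticFunction.sigma_one_apply, Nat.cast_sum]

/- Compare coefficients in the logarithmic derivative of the generating function of `p`. -/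
lemma natCast_mul_numPartitions (n : ℕ) : n * numPartitions n =
    coeff n (PowerSeries.mk numPartitions *
      PowerSeries.mk fun k => (ArithmeticFunction.sigma 1 k : ℝ)) := by
  have hderiv : coeff n (X * derivative (R := ℝ) (invQFactorial ℝ n)) = n * numPartitions n := by
    cases n with
    | zero => simp
    | succ n =>
      rw [coeff_succ_X_mul, coeff_derivative, coeff_invQFactorial_of_le le_rfl, mul_comm]
      push_cast
      rfl
  rw [← hderiv, X_mul_derivative_invQFactorial, coeff_mul, coeff_mul]
  refine sum_congr rfl fun x hx => ?_
  rw [coeff_invQFactorial_of_le (Finset.HasAntidiagonal.antidiagonal.fst_le hx),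
    coeff_sum_X_pow_mul_inv (Finset.HasAntidiagonal.antidiagonal.snd_le hx), coeff_mk, coeff_mk]

lemma numPartitions_monotone : Monotone numPartitions := monotone_nat_of_le_succ fun n => by
  rw [← coeff_invQFactorial_of_le n.le_succ, ← coeff_invQFactorial_of_le (n + 1).le_refl]
  exact coeff_invQFactorial_le_succ n.succ_pos n

lemma numPartitions_zero : numPartitions 0 = 1 := by
  rw [← coeff_invQFactorial_of_le le_rfl, invQFactorial_zero, coeff_zero_one]

lemma one_le_numPartitions (n : ℕ) : 1 ≤ numPartitions n :=
  numPartitions_zero ▸ numPartitions_monotone n.zero_le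

lemma numPartitions_pos (n : ℕ) : 0 < numPartitions n := one_pos.trans_le (one_le_numPartitions n)

/-- `p(0) + ⋯ + p(n - 1)`. -/
noncomputable def partitionSum (n : ℕ) : ℝ := ∑ j ∈ range n, numPartitions j

/-- `partitionSum 0 + ⋯ + partitionSum n`. -/
noncomputable def partitionDoubleSum (n : ℕ) : ℝ := ∑ j ∈ range (n + 1), partitionSum j

/-- The summatory function `σ(0) + ⋯ + σ(n)` of the sum-of-divisors function. -/
noncomputable def sigmaSum (n : ℕ) : ℝ := ∑ k ∈ range (n + 1), (ArithmeticFunction.sigma 1 k : ℝ)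

/-- The generating function `(1 - X) ∑ p(n) X ^ n` of the increments of `p`. -/
noncomputable def numPartitionsDiff : ℝ⟦X⟧ := (1 - X) * PowerSeries.mk numPartitions

lemma coeff_numPartitionsDiff_nonneg (n : ℕ) : 0 ≤ coeff n numPartitionsDiff :=
  coeff_one_sub_X_mul_mk_nonneg (numPartitions_nonneg 0) numPartitions_monotone n

lemma mk_natCast :
    (PowerSeries.mk fun n => (n : ℝ)) = X * (PowerSeries.mk 1 * PowerSeries.mk 1) := by
  rw [← mk_sum_range]
  simp

lemma mk_triangular : (PowerSeries.mk fun n => (n * (n + 1) / 2 : ℝ))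
    = PowerSeries.mk 1 * PowerSeries.mk fun n => (n : ℝ) := by
  rw [← mk_sum_range_succ]
  congr 1 with n
  induction n with
  | zero => simp
  | succ n ih =>
    rw [sum_range_succ, ← ih]
    push_cast
    ring

lemma natCast_mul_numPartitions_eq_coeff_diff (n : ℕ) :
    n * numPartitions n = coeff n (numPartitionsDiff * PowerSeries.mk sigmaSum) := by
  have hmk : PowerSeries.mk sigmaSum = PowerSeries.mk 1 *
      PowerSeries.mk fun k => (ArithmeticFunction.sigma 1 k : ℝ) := mk_sum_range_succ _
  rw [natCast_mul_numPartitions, numPartitionsDiff, hmk]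
  congr 1
  linear_combination -(PowerSeries.mk numPartitions *
    PowerSeries.mk fun k => (ArithmeticFunction.sigma 1 k : ℝ)) * mk_one_mul_one_sub_eq_one ℝ

lemma mk_partitionSum :
    PowerSeries.mk partitionSum = numPartitionsDiff * PowerSeries.mk fun n => (n : ℝ) := by
  have hmk : PowerSeries.mk partitionSum
      = X * (PowerSeries.mk 1 * PowerSeries.mk numPartitions) := mk_sum_range _
  rw [numPartitionsDiff, hmk, mk_natCast]
  linear_combination -(X * PowerSeries.mk numPartitions * PowerSeries.mk 1)
    * mk_one_mul_one_sub_eq_one ℝ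

lemma mk_partitionDoubleSum : PowerSeries.mk partitionDoubleSum
    = numPartitionsDiff * PowerSeries.mk fun n => (n * (n + 1) / 2 : ℝ) := by
  have hmk : PowerSeries.mk partitionDoubleSum = PowerSeries.mk 1 * PowerSeries.mk partitionSum :=
    mk_sum_range_succ _
  rw [hmk, mk_partitionSum, mk_triangular]
  ring

lemma sum_Ioc_zero_eq_sum_range {M : Type*} [AddCommMonoid M] {f : ℕ → M} (h0 : f 0 = 0) (n : ℕ) :
    ∑ k ∈ Ioc 0 n, f k = ∑ k ∈ range (n + 1), f k := by
  rw [range_eq_Ico, sum_eq_sum_Ico_succ_bot n.succ_pos, h0, zero_add]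
  rfl

lemma sigmaSum_eq_sum_div (x : ℕ) :
    sigmaSum x = ∑ j ∈ Ioc 0 x, (((x / j : ℕ) : ℝ) * ((x / j : ℕ) + 1) / 2) := by
  have hgauss (m : ℕ) : (∑ k ∈ Ioc 0 m, (k : ℝ)) = m * (m + 1) / 2 := by
    rw [sum_Ioc_zero_eq_sum_range Nat.cast_zero, ← Nat.cast_sum, sum_range_id, Nat.cast_div
      (Nat.even_mul_pred_self _).two_dvd two_ne_zero]
    push_cast
    ring
  have hswap := ArithmeticFunction.sum_Ioc_mul_eq_sum_sum ArithmeticFunction.zeta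
    (ArithmeticFunction.pow 1) x
  rw [ArithmeticFunction.zeta_mul_pow_eq_sigma] at hswap
  rw [sigmaSum, ← sum_Ioc_zero_eq_sum_range (by simp), ← Nat.cast_sum, hswap, Nat.cast_sum]
  refine sum_congr rfl fun j hj => ?_
  rw [ArithmeticFunction.zeta_apply_ne (mem_Ioc.1 hj).1.ne', one_mul, ← hgauss, Nat.cast_sum]
  simp

end DivisorSums

/-- The constant `γ = π / √6` in the growth rate `log p(n) ~ 2γ √n` of the partition function. It
satisfies `γ ^ 2 = ζ(2)`. -/
noncomputable def partitionGrowth : ℝ := Real.pi / √6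

local notation "γ" => partitionGrowth

section SummatorySigma

open Finset PowerSeries

lemma partitionGrowth_sq : γ ^ 2 = Real.pi ^ 2 / 6 := by
  rw [partitionGrowth, div_pow, Real.sq_sqrt (by norm_num)]

lemma partitionGrowth_pos : 0 < γ := by
  unfold partitionGrowth
  positivity

lemma partitionGrowth_gt : 1.26 < γ := by
  nlinarith [partitionGrowth_pos, partitionGrowth_sq, Real.pi_gt_d2]

lemma partitionGrowth_lt : γ < 1.31 := by
  nlinarith [partitionGrowth_pos, partitionGrowth_sq, Real.pi_lt_d2, Real.pi_pos]

lemma sum_inv_sq_le_partitionGrowth_sq (x : ℕ) : ∑ j ∈ Ioc 0 x, 1 / (j : ℝ) ^ 2 ≤ γ ^ 2 :=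
  partitionGrowth_sq ▸ sum_le_hasSum _ (fun _ _ => by positivity) hasSum_zeta_two

lemma partitionGrowth_sq_le_sum_inv_sq_add {x : ℕ} (hx : 1 ≤ x) :
    γ ^ 2 ≤ ∑ j ∈ Ioc 0 x, 1 / (j : ℝ) ^ 2 + 1 / x := by
  rw [partitionGrowth_sq]
  refine le_of_tendsto ((Filter.tendsto_add_atTop_iff_nat 1).2 hasSum_zeta_two.tendsto_sum_nat) ?_
  filter_upwards [Filter.eventually_ge_atTop x] with M hM
  rw [← sum_Ioc_zero_eq_sum_range (by simp), ← sum_Ioc_consecutive _ x.zero_le hM]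
  have htail := sum_Ioc_inv_sq_le_sub (α := ℝ) (Nat.one_le_iff_ne_zero.1 hx) hM
  have : (0 : ℝ) ≤ (M : ℝ)⁻¹ := by positivity
  simp only [one_div]
  linarith

lemma abs_sigmaSum_sub_sum_le (x : ℕ) :
    |sigmaSum x - (x : ℝ) ^ 2 / 2 * ∑ j ∈ Ioc 0 x, 1 / (j : ℝ) ^ 2| ≤
      x / 2 * (1 + Real.log x) := by
  have hharmonic : ∑ j ∈ Ioc 0 x, (j : ℝ)⁻¹ ≤ 1 + Real.log x := by
    have := harmonic_le_one_add_log x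
    rw [harmonic_eq_sum_Icc] at this
    push_cast at this
    exact this
  refine le_trans ?_ (mul_le_mul_of_nonneg_left hharmonic (by positivity))
  rw [sigmaSum_eq_sum_div, mul_sum, mul_sum, ← sum_sub_distrib]
  refine (abs_sum_le_sum_abs _ _).trans (sum_le_sum fun j hj => ?_)
  have hj : (0 : ℝ) < j := Nat.cast_pos.2 (mem_Ioc.1 hj).1
  have hfloor : ((x / j : ℕ) : ℝ) ≤ x / j := Nat.cast_div_le
  have hlt_floor : (x : ℝ) / j < (x / j : ℕ) + 1 := Nat.floor_div_eq_div (K := ℝ) x j ▸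
    Nat.lt_floor_add_one _
  have hfloor_nonneg : (0 : ℝ) ≤ (x / j : ℕ) := Nat.cast_nonneg _
  rw [show (x : ℝ) ^ 2 / 2 * (1 / (j : ℝ) ^ 2) = (x / j : ℝ) ^ 2 / 2 by field_simp,
    show (x : ℝ) / 2 * (j : ℝ)⁻¹ = (x / j : ℝ) / 2 by field_simp]
  generalize ((x / j : ℕ) : ℝ) = m at *
  rw [abs_le]
  constructor <;> nlinarith

lemma abs_sigmaSum_sub_le {x : ℕ} (hx : 1 ≤ x) :
    |sigmaSum x - γ ^ 2 * (x * (x + 1) / 2)| ≤ x * (3 + Real.log x) := by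
  have hx' : (1 : ℝ) ≤ x := by exact_mod_cast hx
  have hsum := abs_sigmaSum_sub_sum_le x
  have hle := sum_inv_sq_le_partitionGrowth_sq x
  have hge := partitionGrowth_sq_le_sum_inv_sq_add hx
  set B := ∑ j ∈ Ioc 0 x, 1 / (j : ℝ) ^ 2
  have hlower : (x : ℝ) ^ 2 / 2 * B ≤ (x : ℝ) ^ 2 / 2 * γ ^ 2 := by gcongr
  have hupper : (x : ℝ) ^ 2 / 2 * γ ^ 2 ≤ (x : ℝ) ^ 2 / 2 * B + x / 2 := by
    calc (x : ℝ) ^ 2 / 2 * γ ^ 2 ≤ (x : ℝ) ^ 2 / 2 * (B + 1 / x) := by gcongr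
      _ = (x : ℝ) ^ 2 / 2 * B + x / 2 := by field_simp
  have hlinear : γ ^ 2 * x ≤ 2 * x :=
    mul_le_mul_of_nonneg_right (by nlinarith [partitionGrowth_pos, partitionGrowth_lt])
      (zero_le_one.trans hx')
  have hlinear_nonneg : 0 ≤ γ ^ 2 * x := by positivity
  have hlog : 0 ≤ x * Real.log x := mul_nonneg (zero_le_one.trans hx') (Real.log_nonneg hx')
  rw [abs_le] at hsum ⊢
  constructor <;> linarith [hsum.1, hsum.2]

/-- `n ^ (1 / 4)`. -/
noncomputable def fourthRoot (n : ℕ) : ℝ := (n : ℝ) ^ (1 / 4 : ℝ)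

lemma fourthRoot_mono : Monotone fourthRoot := fun _ _ h =>
  Real.rpow_le_rpow (Nat.cast_nonneg _) (Nat.cast_le.2 h) (by norm_num)

lemma one_le_fourthRoot {n : ℕ} (hn : 1 ≤ n) : 1 ≤ fourthRoot n :=
  Real.one_le_rpow (by exact_mod_cast hn) (by norm_num)

lemma log_natCast_le_fourthRoot (n : ℕ) : Real.log n ≤ 4 * fourthRoot n := by
  have := Real.log_le_rpow_div (Nat.cast_nonneg (α := ℝ) n) (show (0 : ℝ) < 1 / 4 by norm_num)
  rw [fourthRoot]
  linarith

/- All three sequences are convolutions with the nonnegative increments of `p`, so it suffices to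
compare `sigmaSum k`, `γ ^ 2 * (k * (k + 1) / 2)` and `k` termwise. -/
theorem abs_mul_numPartitions_sub_le {n : ℕ} (hn : 1 ≤ n) :
    |n * numPartitions n - γ ^ 2 * partitionDoubleSum n| ≤ 7 * fourthRoot n * partitionSum n := by
  have hsigma (k : ℕ) (hk : k ≤ n) :
      |sigmaSum k - γ ^ 2 * (k * (k + 1) / 2)| ≤ 7 * fourthRoot n * k := by
    rcases Nat.eq_zero_or_pos k with rfl | hpos
    · simp [sigmaSum]
    · calc |sigmaSum k - γ ^ 2 * (k * (k + 1) / 2)|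
          ≤ k * (3 + Real.log k) := abs_sigmaSum_sub_le hpos
        _ ≤ k * (7 * fourthRoot n) := by
          gcongr
          linarith [log_natCast_le_fourthRoot k, fourthRoot_mono hk, one_le_fourthRoot hn]
        _ = 7 * fourthRoot n * k := mul_comm _ _
  have hdiff : n * numPartitions n - γ ^ 2 * partitionDoubleSum n = coeff n (numPartitionsDiff *
      PowerSeries.mk fun k => sigmaSum k - γ ^ 2 * (k * (k + 1) / 2)) := by
    rw [natCast_mul_numPartitions_eq_coeff_diff, ← coeff_mk n partitionDoubleSum,
      mk_partitionDoubleSum]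
    simp only [coeff_mul, coeff_mk, mul_sum, ← sum_sub_distrib]
    exact sum_congr rfl fun _ _ => by ring
  have hsum : 7 * fourthRoot n * partitionSum n
      = coeff n (numPartitionsDiff * PowerSeries.mk fun k => 7 * fourthRoot n * (k : ℝ)) := by
    rw [← coeff_mk n partitionSum, mk_partitionSum]
    simp only [coeff_mul, coeff_mk, mul_sum]
    exact sum_congr rfl fun _ _ => by ring
  rw [hdiff, hsum]
  exact abs_coeff_mul_mk_le coeff_numPartitionsDiff_nonneg hsigma

end SummatorySigma

section Riccati

open Finset

lemma fourthRoot_pow_four (n : ℕ) : fourthRoot n ^ 4 = n := by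
  rw [fourthRoot, ← Real.rpow_natCast, ← Real.rpow_mul n.cast_nonneg]
  norm_num

lemma partitionSum_succ (n : ℕ) : partitionSum (n + 1) = partitionSum n + numPartitions n :=
  sum_range_succ _ _

lemma partitionDoubleSum_succ (n : ℕ) :
    partitionDoubleSum (n + 1) = partitionDoubleSum n + partitionSum (n + 1) :=
  sum_range_succ _ _

lemma partitionSum_nonneg (n : ℕ) : 0 ≤ partitionSum n :=
  sum_nonneg fun j _ => numPartitions_nonneg j

lemma partitionSum_pos {n : ℕ} (hn : 1 ≤ n) : 0 < partitionSum n :=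
  sum_pos (fun j _ => numPartitions_pos j) (nonempty_range_iff.2 (Nat.one_le_iff_ne_zero.1 hn))

lemma partitionDoubleSum_nonneg (n : ℕ) : 0 ≤ partitionDoubleSum n :=
  sum_nonneg fun j _ => partitionSum_nonneg j

/-- The ratio `z n` of the iterated partial sums of `p`; it grows like `√n / γ`. -/
noncomputable def doubleSumRatio (n : ℕ) : ℝ := partitionDoubleSum n / partitionSum n

/-- The ratio `y n` of `p(n)` and its partial sum; it decays like `γ / √n`. -/
noncomputable def termRatio (n : ℕ) : ℝ := numPartitions n / partitionSum n

lemma one_le_doubleSumRatio {n : ℕ} (hn : 1 ≤ n) : 1 ≤ doubleSumRatio n := by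
  rw [doubleSumRatio, one_le_div (partitionSum_pos hn)]
  obtain ⟨n, rfl⟩ := Nat.exists_eq_add_of_le' hn
  exact (partitionDoubleSum_succ n).symm ▸ le_add_of_nonneg_left (partitionDoubleSum_nonneg n)

lemma termRatio_pos {n : ℕ} (hn : 1 ≤ n) : 0 < termRatio n :=
  div_pos (numPartitions_pos n) (partitionSum_pos hn)

lemma doubleSumRatio_succ {n : ℕ} (hn : 1 ≤ n) :
    doubleSumRatio (n + 1) = 1 + doubleSumRatio n / (1 + termRatio n) := by
  have := partitionSum_pos hn
  have := numPartitions_pos n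
  rw [doubleSumRatio, doubleSumRatio, termRatio, partitionDoubleSum_succ, partitionSum_succ]
  field_simp
  ring

lemma abs_mul_termRatio_sub_le {n : ℕ} (hn : 1 ≤ n) :
    |fourthRoot n ^ 4 * termRatio n - γ ^ 2 * doubleSumRatio n| ≤ 7 * fourthRoot n := by
  have hpos := partitionSum_pos hn
  have hratio : fourthRoot n ^ 4 * termRatio n - γ ^ 2 * doubleSumRatio n
      = (n * numPartitions n - γ ^ 2 * partitionDoubleSum n) / partitionSum n := by
    rw [fourthRoot_pow_four, termRatio, doubleSumRatio]
    ring
  rw [hratio, abs_div, abs_of_pos hpos, div_le_iff₀ hpos]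
  exact abs_mul_numPartitions_sub_le hn

variable {r r' g z y : ℝ}

lemma riccati_step_le (hr : 1 ≤ r) (hg : 1.26 < g) (hy : 0 < y) (hz : 0 ≤ z)
    (h : g ^ 2 * z - 7 * r ≤ r ^ 4 * y) (hzr : z ≤ r ^ 2 / g + 10 * r) :
    1 + z / (1 + y) ≤ r ^ 2 / g + 10 * r := by
  by_cases hsmall : z ≤ r ^ 2 / g + 10 * r - 1
  · linarith [div_le_self hz (by linarith : 1 ≤ 1 + y)]
  have hlower : r ^ 2 / g + 8 * r ≤ z - 1 := by linarith
  have hsq : 0 < r ^ 2 / g := by positivity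
  have hgy : g ^ 2 * (r ^ 2 / g) ≤ r ^ 4 * y := by
    have hgz := mul_le_mul_of_nonneg_left hlower (sq_nonneg g)
    have hgr : 1 * r ≤ g ^ 2 * r := mul_le_mul_of_nonneg_right (by nlinarith) (by linarith)
    linarith [sq_nonneg g]
  have hmul : r ^ 4 * 1 ≤ r ^ 4 * ((z - 1) * y) := by
    calc r ^ 4 * 1 = r ^ 2 / g * (g ^ 2 * (r ^ 2 / g)) := by field_simp
      _ ≤ (z - 1) * (r ^ 4 * y) := by gcongr <;> linarith
      _ = r ^ 4 * ((z - 1) * y) := by ring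
  have hone : 1 ≤ (z - 1) * y := le_of_mul_le_mul_left hmul (by positivity)
  have hdiv : z / (1 + y) ≤ z - 1 := by
    rw [div_le_iff₀ (by linarith)]
    linarith
  linarith

lemma sq_le_sq_add_of_pow_four_eq (hr : 0 < r) (h : r' ^ 4 = r ^ 4 + 1) :
    r' ^ 2 ≤ r ^ 2 + 1 / (2 * r ^ 2) := by
  refine le_of_sq_le_sq ?_ (by positivity)
  have hexpand : (r ^ 2 + 1 / (2 * r ^ 2)) ^ 2 = r ^ 4 + 1 + 1 / (4 * r ^ 4) := by
    field_simp
    ring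
  have hnonneg : 0 ≤ 1 / (4 * r ^ 4) := by positivity
  nlinarith

lemma riccati_lower_barrier {b : ℝ} (hr : 1 ≤ r) (hg : 1.26 < g) (hb : b = r ^ 2 / g - 10 * r)
    (hb0 : 0 < b) : b * (g ^ 2 * b + 7 * r) ≤ r ^ 4 - r ^ 2 / (2 * g) := by
  have hgb : g ^ 2 * b = g * r ^ 2 - 10 * g ^ 2 * r := by
    rw [hb]
    field_simp
  have hgr : 1.5 * r ≤ g ^ 2 * r := mul_le_mul_of_nonneg_right (by nlinarith) (by linarith)
  calc b * (g ^ 2 * b + 7 * r) ≤ r ^ 2 / g * (g * r ^ 2 - r) := by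
        gcongr <;> linarith
    _ = r ^ 4 - r * (r ^ 2 / g) := by field_simp
    _ ≤ r ^ 4 - 1 / 2 * (r ^ 2 / g) := by
        gcongr
        linarith
    _ = r ^ 4 - r ^ 2 / (2 * g) := by field_simp

lemma le_riccati_step (hr : 1 ≤ r) (hr' : r' ^ 4 = r ^ 4 + 1) (hrr' : r ≤ r') (hg : 1.26 < g)
    (hy : 0 < y) (hz : 0 ≤ z) (h : r ^ 4 * y ≤ g ^ 2 * z + 7 * r)
    (hrz : r ^ 2 / g - 10 * r ≤ z) : r' ^ 2 / g - 10 * r' ≤ 1 + z / (1 + y) := by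
  set b := r ^ 2 / g - 10 * r with hb
  set e := 1 / (2 * r ^ 2 * g) with he
  have he1 : e ≤ 1 := by
    rw [he, div_le_one (by positivity)]
    nlinarith
  have hb' : r' ^ 2 / g - 10 * r' ≤ b + e := by
    have hdiv : r' ^ 2 / g ≤ (r ^ 2 + 1 / (2 * r ^ 2)) / g := by
      gcongr
      exact sq_le_sq_add_of_pow_four_eq (by linarith) hr'
    have hsplit : (r ^ 2 + 1 / (2 * r ^ 2)) / g = r ^ 2 / g + e := by
      rw [he]
      field_simp
    linarith
  rcases le_or_gt b 0 with hb0 | hb0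
  · have : 0 ≤ z / (1 + y) := by positivity
    linarith
  have hmono : b * r ^ 4 / (r ^ 4 + g ^ 2 * b + 7 * r) ≤ z / (1 + y) := by
    rw [div_le_div_iff₀ (by positivity) (by positivity)]
    have := mul_le_mul_of_nonneg_left h hb0.le
    have : r * b ≤ r * z := by gcongr
    have : r ^ 4 * b ≤ r ^ 4 * z := by gcongr
    nlinarith
  have hbarrier : b + e - 1 ≤ b * r ^ 4 / (r ^ 4 + g ^ 2 * b + 7 * r) := by
    rw [le_div_iff₀ (by positivity)]
    have hre : r ^ 4 * e = r ^ 2 / (2 * g) := by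
      rw [he]
      field_simp
    have := riccati_lower_barrier hr hg hb hb0
    have : (e - 1) * (g ^ 2 * b + 7 * r) ≤ 0 :=
      mul_nonpos_of_nonpos_of_nonneg (by linarith) (by positivity)
    linarith
  linarith

/- The recursion `z (n + 1) = 1 + z n / (1 + y n)` with `y n ≈ γ ^ 2 * z n / n` is a discrete
Riccati equation with attracting solution `√n / γ`; the interval of radius `10 * fourthRoot n`
around that solution is invariant. -/
theorem abs_doubleSumRatio_sub_le {n : ℕ} (hn : 1 ≤ n) :
    |doubleSumRatio n - fourthRoot n ^ 2 / γ| ≤ 10 * fourthRoot n := by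
  have hγ := partitionGrowth_gt
  induction n, hn using Nat.le_induction with
  | base =>
    have hratio : doubleSumRatio 1 = 1 := by
      simp [doubleSumRatio, partitionDoubleSum, partitionSum, sum_range_succ, numPartitions_zero]
    have hroot : fourthRoot 1 = 1 := by simp [fourthRoot]
    have hinv : 1 / γ ≤ 1 := by
      rw [div_le_one (by linarith)]
      linarith
    have : 0 < 1 / γ := by positivity
    rw [hratio, hroot, one_pow, abs_le]
    constructor <;> linarith
  | succ n hn ih =>
    have hr := one_le_fourthRoot hn
    have hrr := fourthRoot_mono n.le_succ
    have hr4 : fourthRoot (n + 1) ^ 4 = fourthRoot n ^ 4 + 1 := by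
      rw [fourthRoot_pow_four, fourthRoot_pow_four, Nat.cast_succ]
    have hz := zero_le_one.trans (one_le_doubleSumRatio hn)
    obtain ⟨hy_ge, hy_le⟩ := abs_le.1 (abs_mul_termRatio_sub_le hn)
    obtain ⟨hz_ge, hz_le⟩ := abs_le.1 ih
    have hup := riccati_step_le hr hγ (termRatio_pos hn) hz (by linarith) (by linarith)
    have hlow := le_riccati_step hr hr4 hrr hγ (termRatio_pos hn) hz (by linarith) (by linarith)
    have hsq : fourthRoot n ^ 2 / γ ≤ fourthRoot (n + 1) ^ 2 / γ := by gcongr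
    rw [doubleSumRatio_succ hn, abs_le]
    constructor <;> linarith

end Riccati

section LogAsymptotics

lemma abs_log_sub_log_le {x y : ℝ} (hx : 1 ≤ x) (hy : 1 ≤ y) :
    |Real.log x - Real.log y| ≤ |x - y| := by
  wlog hyx : y ≤ x generalizing x y
  · rw [abs_sub_comm, abs_sub_comm x]
    exact this hy hx (le_of_not_ge hyx)
  have hy0 : 0 < y := by linarith
  rw [abs_of_nonneg (sub_nonneg.2 (Real.log_le_log hy0 hyx)), abs_of_nonneg (sub_nonneg.2 hyx),
    ← Real.log_div (by linarith) hy0.ne']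
  calc Real.log (x / y) ≤ x / y - 1 := Real.log_le_sub_one_of_pos (by positivity)
    _ = (x - y) / y := by field_simp
    _ ≤ x - y := div_le_self (sub_nonneg.2 hyx) hy

lemma abs_neg_log_one_sub_sub_le {x : ℝ} (hx0 : 0 ≤ x) (hx : x ≤ 1 / 2) :
    |-Real.log (1 - x) - x| ≤ 2 * x ^ 2 := by
  have htaylor := Real.abs_log_sub_add_sum_range_le (x := x) (by rw [abs_of_nonneg hx0]; linarith) 1
  rw [abs_of_nonneg hx0] at htaylor
  calc |-Real.log (1 - x) - x| = |x + Real.log (1 - x)| := by rw [← abs_neg]; ring_nf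
    _ ≤ x ^ 2 / (1 - x) := by simpa using htaylor
    _ ≤ 2 * x ^ 2 := by
      rw [div_le_iff₀ (by linarith)]
      nlinarith [sq_nonneg x]

variable {r s g z : ℝ}

lemma inv_sq_le_sq_sub_sq (hr : 0 < r) (h : s ^ 4 = r ^ 4 - 1) :
    1 / (2 * r ^ 2) ≤ r ^ 2 - s ^ 2 := by
  have hprod : (r ^ 2 - s ^ 2) * (r ^ 2 + s ^ 2) = 1 := by linear_combination -h
  rw [div_le_iff₀ (by positivity)]
  nlinarith [hprod, sq_nonneg (r ^ 2 - s ^ 2)]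

lemma sq_sub_sq_le_inv_sq_add (hr : 1 ≤ r) (h : s ^ 4 = r ^ 4 - 1) :
    r ^ 2 - s ^ 2 ≤ 1 / (2 * r ^ 2) + 1 / (2 * r ^ 4) := by
  have hprod : (r ^ 2 - s ^ 2) * (r ^ 2 + s ^ 2) = 1 := by linear_combination -h
  have hpos : 0 ≤ r ^ 2 - s ^ 2 := (by positivity : 0 ≤ 1 / (2 * r ^ 2)).trans
    (inv_sq_le_sq_sub_sq (by linarith) h)
  have hle : r ^ 2 - s ^ 2 ≤ 1 / r ^ 2 := by
    rw [le_div_iff₀ (by positivity)]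
    nlinarith [sq_nonneg s]
  have hle_one : 1 / r ^ 2 ≤ 1 := div_le_one_of_le₀ (one_le_pow₀ hr) (by positivity)
  have hsq : (r ^ 2 - s ^ 2) ^ 2 ≤ 1 / r ^ 2 := by nlinarith
  refine le_of_mul_le_mul_right (a := 2 * r ^ 2) ?_ (by positivity)
  calc (r ^ 2 - s ^ 2) * (2 * r ^ 2) = 1 + (r ^ 2 - s ^ 2) ^ 2 := by linear_combination hprod
    _ ≤ 1 + 1 / r ^ 2 := by linarith
    _ = (1 / (2 * r ^ 2) + 1 / (2 * r ^ 4)) * (2 * r ^ 2) := by field_simp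

lemma inv_cube_le_sub (hr : 0 < r) (hs : 0 ≤ s) (h : s ^ 4 = r ^ 4 - 1) :
    1 / (4 * r ^ 3) ≤ r - s := by
  have hsr : s ≤ r := le_of_pow_le_pow_left₀ four_ne_zero hr.le (by linarith)
  have hprod : (r - s) * ((r + s) * (r ^ 2 + s ^ 2)) = 1 := by linear_combination -h
  rw [div_le_iff₀ (by positivity), ← hprod]
  refine mul_le_mul_of_nonneg_left ?_ (sub_nonneg.2 hsr)
  calc (r + s) * (r ^ 2 + s ^ 2) ≤ (r + r) * (r ^ 2 + r ^ 2) := by gcongr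
    _ = 4 * r ^ 3 := by ring

lemma sq_div_le_of_abs_sub_le (hr : 40 ≤ r) (hg : 0 < g) (hg' : g < 1.31)
    (hz : |z - r ^ 2 / g| ≤ 10 * r) : r ^ 2 / (2 * g) ≤ z := by
  have hsmall : 10 * r ≤ r ^ 2 / (2 * g) := by
    rw [le_div_iff₀ (by positivity)]
    nlinarith
  have hhalf : r ^ 2 / g = 2 * (r ^ 2 / (2 * g)) := by field_simp
  linarith [(abs_le.1 hz).1]

lemma inv_le_of_abs_sub_le (hr : 40 ≤ r) (hg : 0 < g) (hg' : g < 1.31)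
    (hz : |z - r ^ 2 / g| ≤ 10 * r) : z⁻¹ ≤ 2.62 / r ^ 2 := by
  calc z⁻¹ ≤ (r ^ 2 / (2 * g))⁻¹ :=
        inv_anti₀ (by positivity) (sq_div_le_of_abs_sub_le hr hg hg' hz)
    _ = 2 * g / r ^ 2 := inv_div _ _
    _ ≤ 2.62 / r ^ 2 := by
      gcongr
      linarith

lemma abs_inv_sub_le_of_abs_sub_le (hr : 40 ≤ r) (hg : 0 < g) (hg' : g < 1.31)
    (hz : |z - r ^ 2 / g| ≤ 10 * r) : |z⁻¹ - g / r ^ 2| ≤ 35 / r ^ 3 := by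
  have hz0 : 0 < z :=
    (by positivity : 0 < r ^ 2 / (2 * g)).trans_le (sq_div_le_of_abs_sub_le hr hg hg' hz)
  have hinv := inv_le_of_abs_sub_le hr hg hg' hz
  calc |z⁻¹ - g / r ^ 2| = |z - r ^ 2 / g| * (z⁻¹ * (g / r ^ 2)) := by
        rw [← abs_neg, ← abs_of_pos (by positivity : 0 < z⁻¹ * (g / r ^ 2)), ← abs_mul]
        congr 1
        field_simp
        ring
    _ ≤ 10 * r * (2.62 / r ^ 2 * (1.31 / r ^ 2)) := by gcongr
    _ ≤ 35 / r ^ 3 := by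
        rw [show 10 * r * (2.62 / r ^ 2 * (1.31 / r ^ 2)) = 34.322 / r ^ 3 by field_simp; norm_num]
        gcongr
        norm_num

/- With `s = (r ^ 4 - 1) ^ (1 / 4)`, both `-log (1 - 1 / z)` and `2 * g * (r ^ 2 - s ^ 2)` equal
`g / r ^ 2 + O(1 / r ^ 3)`, and the error is absorbed by `r - s ≥ 1 / (4 * r ^ 3)`. -/
lemma abs_neg_log_one_sub_inv_sub_le (hr : 40 ≤ r) (hs : 0 ≤ s) (hrs : s ^ 4 = r ^ 4 - 1)
    (hg : 0 < g) (hg' : g < 1.31) (hz : |z - r ^ 2 / g| ≤ 10 * r) :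
    |-Real.log (1 - z⁻¹) - 2 * g * (r ^ 2 - s ^ 2)| ≤ 150 * (r - s) := by
  have hr0 : 0 < r := by linarith
  have hinv := inv_le_of_abs_sub_le hr hg hg' hz
  have hr2 : 2.62 / r ^ 2 ≤ 1 / 2 := by
    rw [div_le_iff₀ (by positivity)]
    nlinarith
  have hz0 : 0 ≤ z⁻¹ := inv_nonneg.2 <|
    (by positivity : 0 ≤ r ^ 2 / (2 * g)).trans (sq_div_le_of_abs_sub_le hr hg hg' hz)
  have hr4 : 1 / r ^ 4 ≤ 1 / 40 * (1 / r ^ 3) := by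
    rw [one_div_mul_one_div, pow_succ' r 3]
    gcongr
  have hlog : |-Real.log (1 - z⁻¹) - z⁻¹| ≤ 14 * (1 / r ^ 4) := by
    calc |-Real.log (1 - z⁻¹) - z⁻¹| ≤ 2 * z⁻¹ ^ 2 :=
          abs_neg_log_one_sub_sub_le hz0 (hinv.trans hr2)
      _ ≤ 2 * (2.62 / r ^ 2) ^ 2 := by gcongr
      _ = 13.7288 * (1 / r ^ 4) := by
        field_simp
        norm_num
      _ ≤ 14 * (1 / r ^ 4) := by
        gcongr
        norm_num
  have hlin := abs_inv_sub_le_of_abs_sub_le hr hg hg' hz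
  have hsq_ge := mul_le_mul_of_nonneg_left (inv_sq_le_sq_sub_sq hr0 hrs) (by linarith : 0 ≤ 2 * g)
  have hsq_le := mul_le_mul_of_nonneg_left (sq_sub_sq_le_inv_sq_add (by linarith) hrs)
    (by linarith : 0 ≤ 2 * g)
  rw [show 2 * g * (1 / (2 * r ^ 2)) = g / r ^ 2 by field_simp] at hsq_ge
  rw [show 2 * g * (1 / (2 * r ^ 2) + 1 / (2 * r ^ 4)) = g / r ^ 2 + g * (1 / r ^ 4) by field_simp]
    at hsq_le
  have hg4 : g * (1 / r ^ 4) ≤ 1.31 * (1 / r ^ 4) := by gcongr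
  have hsub := inv_cube_le_sub hr0 hs hrs
  rw [show 1 / (4 * r ^ 3) = 1 / r ^ 3 / 4 by field_simp] at hsub
  rw [div_eq_mul_one_div 35] at hlin
  have : 0 < 1 / r ^ 3 := by positivity
  rw [abs_le] at hlog hlin ⊢
  constructor <;> linarith

lemma fourthRoot_nonneg (n : ℕ) : 0 ≤ fourthRoot n := Real.rpow_nonneg n.cast_nonneg _

lemma forty_le_fourthRoot {n : ℕ} (hn : 2560000 ≤ n) : 40 ≤ fourthRoot n := by
  refine le_of_pow_le_pow_left₀ four_ne_zero (fourthRoot_nonneg n) ?_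
  rw [fourthRoot_pow_four]
  norm_num
  exact_mod_cast hn

lemma one_le_partitionDoubleSum {n : ℕ} (hn : 1 ≤ n) : 1 ≤ partitionDoubleSum n := by
  obtain ⟨n, rfl⟩ := Nat.exists_eq_add_of_le' hn
  rw [partitionDoubleSum_succ, partitionSum_succ]
  linarith [partitionDoubleSum_nonneg n, partitionSum_nonneg n, one_le_numPartitions n]

lemma one_sub_inv_doubleSumRatio_succ (n : ℕ) :
    1 - (doubleSumRatio (n + 1))⁻¹ = partitionDoubleSum n / partitionDoubleSum (n + 1) := by
  have := one_le_partitionDoubleSum (Nat.le_add_left 1 n)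
  rw [doubleSumRatio, inv_div, one_sub_div (by linarith), partitionDoubleSum_succ,
    add_sub_cancel_right]

lemma abs_log_partitionDoubleSum_sub_le {M N : ℕ} (hM : 2560000 ≤ M) (hMN : M ≤ N) :
    |Real.log (partitionDoubleSum N) - Real.log (partitionDoubleSum M)
        - 2 * γ * (fourthRoot N ^ 2 - fourthRoot M ^ 2)|
      ≤ 150 * (fourthRoot N - fourthRoot M) := by
  induction N, hMN using Nat.le_induction with
  | base => simp
  | succ N hN ih =>
    have hstep := abs_neg_log_one_sub_inv_sub_le (forty_le_fourthRoot (by lia : 2560000 ≤ N + 1))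
      (fourthRoot_nonneg N) (by simp only [fourthRoot_pow_four]; push_cast; ring)
      partitionGrowth_pos partitionGrowth_lt (abs_doubleSumRatio_sub_le N.succ_pos)
    have hpos {k : ℕ} (hk : 1 ≤ k) : partitionDoubleSum k ≠ 0 :=
      (one_pos.trans_le (one_le_partitionDoubleSum hk)).ne'
    rw [one_sub_inv_doubleSumRatio_succ, Real.log_div (hpos (by lia)) (hpos (by lia))] at hstep
    rw [abs_le] at *
    constructor <;> linarith

lemma abs_log_numPartitions_sub_le {n : ℕ} (hn : 2560000 ≤ n) :
    |Real.log n + Real.log (numPartitions n) - Real.log (partitionDoubleSum n) - Real.log (γ ^ 2)|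
      ≤ 19 / fourthRoot n := by
  have hn0 : (n : ℝ) ≠ 0 := by exact_mod_cast (by lia : n ≠ 0)
  have hr := forty_le_fourthRoot hn
  have hn1 : 1 ≤ n := by lia
  have hQ : 0 < partitionDoubleSum n := one_pos.trans_le (one_le_partitionDoubleSum hn1)
  have hinv := inv_le_of_abs_sub_le hr partitionGrowth_pos partitionGrowth_lt
    (abs_doubleSumRatio_sub_le hn1)
  have hdiff : |n * numPartitions n / partitionDoubleSum n - γ ^ 2| ≤ 19 / fourthRoot n := by
    rw [div_sub' hQ.ne', abs_div, abs_of_pos hQ, mul_comm _ (γ ^ 2)]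
    calc |n * numPartitions n - γ ^ 2 * partitionDoubleSum n| / partitionDoubleSum n
        ≤ 7 * fourthRoot n * partitionSum n / partitionDoubleSum n := by
          gcongr
          exact abs_mul_numPartitions_sub_le hn1
      _ = 7 * fourthRoot n * (doubleSumRatio n)⁻¹ := by rw [doubleSumRatio, inv_div, mul_div_assoc]
      _ ≤ 7 * fourthRoot n * (2.62 / fourthRoot n ^ 2) := by gcongr
      _ = 18.34 / fourthRoot n := by
        field_simp
        norm_num
      _ ≤ 19 / fourthRoot n := by
        gcongr
        norm_num
  have hsmall : 19 / fourthRoot n ≤ 1 / 2 := by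
    rw [div_le_iff₀ (by linarith)]
    linarith
  have hγ : 1.5 ≤ γ ^ 2 := by nlinarith [partitionGrowth_gt]
  rw [← Real.log_mul hn0 (numPartitions_pos n).ne',
    ← Real.log_div (mul_ne_zero hn0 (numPartitions_pos n).ne') hQ.ne']
  exact (abs_log_sub_log_le (by linarith [(abs_le.1 hdiff).1]) (by linarith)).trans hdiff

lemma le_log_numPartitions {n : ℕ} (hn : 2560000 ≤ n) :
    2 * γ * fourthRoot n ^ 2 - 160 * fourthRoot n ≤ Real.log (numPartitions n) := by
  have hr := forty_le_fourthRoot hn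
  have hsmall : 19 / fourthRoot n ≤ 1 / 2 := by
    rw [div_le_iff₀ (by linarith)]
    linarith
  have hbase : fourthRoot 2560000 = 40 := by
    rw [← pow_left_inj₀ (fourthRoot_nonneg _) (by norm_num) four_ne_zero, fourthRoot_pow_four]
    norm_num
  have hdouble := (abs_le.1 (abs_log_partitionDoubleSum_sub_le le_rfl hn)).1
  rw [hbase] at hdouble
  have hdouble_base := Real.log_nonneg (one_le_partitionDoubleSum (n := 2560000) (by norm_num))
  have hγ : 0 ≤ Real.log (γ ^ 2) := Real.log_nonneg (by nlinarith [partitionGrowth_gt])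
  have hlt := partitionGrowth_lt
  linarith [log_natCast_le_fourthRoot n, (abs_le.1 (abs_log_numPartitions_sub_le hn)).1]

end LogAsymptotics

section LocalRatio

lemma log_add_sub_log_le {x k : ℝ} (hx : 0 < x) (hk : 0 ≤ k) :
    Real.log (x + k) - Real.log x ≤ k / x := by
  rw [← Real.log_div (by linarith) hx.ne']
  refine (Real.log_le_sub_one_of_pos (by positivity)).trans_eq ?_
  field_simp
  ring

variable {r s k : ℝ}

lemma sub_le_div_cube (hs : 0 ≤ s) (hsr : s ≤ r) (hr : 0 < r) (h : r ^ 4 = s ^ 4 + k) :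
    r - s ≤ k / r ^ 3 := by
  rw [le_div_iff₀ (by positivity)]
  calc (r - s) * r ^ 3 ≤ (r - s) * (r ^ 3 + (r ^ 2 * s + r * s ^ 2 + s ^ 3)) :=
        mul_le_mul_of_nonneg_left (le_add_of_nonneg_right (by positivity)) (sub_nonneg.2 hsr)
    _ = k := by linear_combination h

lemma sq_sub_sq_le_div_sq (hs : 0 ≤ s) (hsr : s ≤ r) (hr : 0 < r) (h : r ^ 4 = s ^ 4 + k) :
    r ^ 2 - s ^ 2 ≤ k / r ^ 2 := by
  rw [le_div_iff₀ (by positivity)]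
  calc (r ^ 2 - s ^ 2) * r ^ 2 ≤ (r ^ 2 - s ^ 2) * (r ^ 2 + s ^ 2) :=
        mul_le_mul_of_nonneg_left (le_add_of_nonneg_right (sq_nonneg s))
          (sub_nonneg.2 (pow_le_pow_left₀ hs hsr 2))
    _ = k := by linear_combination h

lemma two_mul_sq_sub_sq_sub_div_mem_Icc (hs : 0 ≤ s) (hsr : s ≤ r) (hr : 0 < r)
    (h : r ^ 4 = s ^ 4 + k) :
    2 * (r ^ 2 - s ^ 2) - k / r ^ 2 ∈ Set.Icc 0 (k ^ 2 / r ^ 6) := by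
  have hsquare : 2 * (r ^ 2 - s ^ 2) - k / r ^ 2 = (r ^ 2 - s ^ 2) ^ 2 / r ^ 2 := by
    field_simp
    linear_combination h
  rw [hsquare]
  refine ⟨by positivity, ?_⟩
  calc (r ^ 2 - s ^ 2) ^ 2 / r ^ 2 ≤ (k / r ^ 2) ^ 2 / r ^ 2 := by
        have : 0 ≤ r ^ 2 - s ^ 2 := sub_nonneg.2 (pow_le_pow_left₀ hs hsr 2)
        gcongr
        exact sq_sub_sq_le_div_sq hs hsr hr h
    _ = k ^ 2 / r ^ 6 := by field_simp

lemma fourthRoot_add_pow_four (M k : ℕ) :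
    fourthRoot (M + k) ^ 4 = fourthRoot M ^ 4 + k := by
  simp only [fourthRoot_pow_four, Nat.cast_add]

lemma fourthRoot_add_le_two_mul {M k : ℕ} (hk : k ≤ M) :
    fourthRoot (M + k) ≤ 2 * fourthRoot M := by
  have hM := fourthRoot_nonneg M
  refine le_of_pow_le_pow_left₀ four_ne_zero (by positivity) ?_
  have hkM : (k : ℝ) ≤ fourthRoot M ^ 4 := by
    rw [fourthRoot_pow_four]
    exact_mod_cast hk
  rw [fourthRoot_add_pow_four, mul_pow]
  linarith [pow_nonneg hM 4]

lemma log_natCast_add_sub_log_le {M k : ℕ} (hM : 1 ≤ M) (hk : k ≤ M) :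
    Real.log (M + k : ℕ) - Real.log M ≤ 2 * (k / fourthRoot (M + k) ^ 3) := by
  have hM0 : (0 : ℝ) < M := by exact_mod_cast hM
  have hR := one_le_fourthRoot (hM.trans (M.le_add_right k))
  have hle : fourthRoot (M + k) ^ 3 ≤ 2 * M := by
    calc fourthRoot (M + k) ^ 3 ≤ fourthRoot (M + k) ^ 4 := pow_le_pow_right₀ hR (by norm_num)
      _ ≤ 2 * M := by
        rw [fourthRoot_pow_four]
        exact_mod_cast (by lia : M + k ≤ 2 * M)
  calc Real.log (M + k : ℕ) - Real.log M ≤ k / M := by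
        rw [Nat.cast_add]
        exact log_add_sub_log_le hM0 k.cast_nonneg
    _ = 2 * (k / (2 * M)) := by field_simp
    _ ≤ 2 * (k / fourthRoot (M + k) ^ 3) := by gcongr

lemma abs_log_numPartitions_sub_log_le {M k : ℕ} (hM : 2560000 ≤ M) (hk : k ≤ M) :
    |Real.log (numPartitions M) - Real.log (numPartitions (M + k))
        + γ / fourthRoot (M + k) ^ 2 * k|
      ≤ 57 / fourthRoot (M + k) + 152 * (k / fourthRoot (M + k) ^ 3)
        + 2 * (k ^ 2 / fourthRoot (M + k) ^ 6) := by
  have hMk : M ≤ M + k := M.le_add_right k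
  have hp_M := abs_le.1 (abs_log_numPartitions_sub_le hM)
  have hp_Mk := abs_le.1 (abs_log_numPartitions_sub_le (hM.trans hMk))
  have hQ := abs_le.1 (abs_log_partitionDoubleSum_sub_le hM hMk)
  have hlog_le := log_natCast_add_sub_log_le (by lia) hk
  have hlog_ge : Real.log M ≤ Real.log (M + k : ℕ) :=
    Real.log_le_log (by exact_mod_cast (by lia : 0 < M)) (by exact_mod_cast hMk)
  have hR4 := fourthRoot_add_pow_four M k
  have hRS := fourthRoot_add_le_two_mul hk
  have hS := forty_le_fourthRoot hM
  have hSR := fourthRoot_mono hMk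
  generalize fourthRoot (M + k) = R at *
  generalize fourthRoot M = S at *
  have hR : 0 < R := by linarith
  have hSinv : 19 / S ≤ 38 / R := by
    rw [div_le_div_iff₀ (by linarith) hR]
    linarith
  have hsub := sub_le_div_cube (by linarith) hSR hR hR4
  obtain ⟨hsq_ge, hsq_le⟩ := two_mul_sq_sub_sq_sub_div_mem_Icc (by linarith) hSR hR hR4
  have hγ_ge := mul_nonneg partitionGrowth_pos.le hsq_ge
  have hγ_le : γ * (2 * (R ^ 2 - S ^ 2) - k / R ^ 2) ≤ 2 * (k ^ 2 / R ^ 6) :=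
    mul_le_mul (by linarith [partitionGrowth_lt]) hsq_le hsq_ge (by norm_num)
  rw [show 57 / R = 19 / R + 38 / R by ring, show γ / R ^ 2 * k = γ * (k / R ^ 2) by ring, abs_le]
  constructor <;> linarith

/-- `n ^ (1 / 20)`. The final error term is `O(1 / twentiethRoot n ^ 2)`. -/
noncomputable def twentiethRoot (n : ℕ) : ℝ := (n : ℝ) ^ (1 / 20 : ℝ)

lemma twentiethRoot_nonneg (n : ℕ) : 0 ≤ twentiethRoot n := Real.rpow_nonneg n.cast_nonneg _

lemma twentiethRoot_pow (n : ℕ) : twentiethRoot n ^ 20 = n := by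
  rw [twentiethRoot, ← Real.rpow_natCast, ← Real.rpow_mul n.cast_nonneg]
  norm_num

lemma fourthRoot_eq_twentiethRoot_pow (n : ℕ) : fourthRoot n = twentiethRoot n ^ 5 := by
  rw [fourthRoot, twentiethRoot, ← Real.rpow_natCast, ← Real.rpow_mul n.cast_nonneg]
  norm_num

/-- `π / √(6 n)`, written in terms of `twentiethRoot n` to be comparable with the error terms. It is
the logarithmic derivative of `p` at `n`, to leading order. -/
noncomputable def decayRate (n : ℕ) : ℝ := γ / twentiethRoot n ^ 10

lemma decayRate_pos {n : ℕ} (hn : 0 < twentiethRoot n) : 0 < decayRate n :=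
  div_pos partitionGrowth_pos (pow_pos hn 10)

lemma two_mul_le_of_le_twentiethRoot_pow {N k : ℕ} (hN : 3 ≤ twentiethRoot N)
    (hk : (k : ℝ) ≤ twentiethRoot N ^ 12) : 2 * k ≤ N := by
  have h8 : 2 ≤ twentiethRoot N ^ 8 := calc
    (2 : ℝ) ≤ 3 ^ 8 := by norm_num
    _ ≤ twentiethRoot N ^ 8 := by gcongr
  have : (2 * k : ℝ) ≤ N := by
    rw [← twentiethRoot_pow N, pow_add _ 8 12]
    gcongr
  exact_mod_cast this

lemma abs_log_numPartitions_sub_add_le {N k : ℕ} (hN : 3 ≤ twentiethRoot N)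
    (hk : (k : ℝ) ≤ twentiethRoot N ^ 12) :
    |Real.log (numPartitions (N - k)) - Real.log (numPartitions N)
        + decayRate N * k| ≤ 300 / twentiethRoot N ^ 2 := by
  have h2k := two_mul_le_of_le_twentiethRoot_pow hN hk
  have hN20 : 3 ^ 20 ≤ N := by
    have : (3 : ℝ) ^ 20 ≤ N := twentiethRoot_pow N ▸ by gcongr
    exact_mod_cast this
  have hmain := abs_log_numPartitions_sub_log_le (M := N - k) (k := k) (by lia) (by lia)
  rw [Nat.sub_add_cancel (by lia), fourthRoot_eq_twentiethRoot_pow] at hmain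
  unfold decayRate
  generalize twentiethRoot N = Y at *
  have hY : 1 ≤ Y := by linarith
  rw [show Y ^ 10 = (Y ^ 5) ^ 2 by ring]
  refine hmain.trans ?_
  have hfirst : 1 / Y ^ 5 ≤ 1 / Y ^ 2 :=
    one_div_le_one_div_of_le (by positivity) (pow_le_pow_right₀ hY (by norm_num))
  have hsecond : k / (Y ^ 5) ^ 3 ≤ 1 / Y ^ 2 := by
    calc k / (Y ^ 5) ^ 3 ≤ Y ^ 12 / (Y ^ 5) ^ 3 := by gcongr
      _ = 1 / Y ^ 3 := by field_simp
      _ ≤ 1 / Y ^ 2 := one_div_le_one_div_of_le (by positivity)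
        (pow_le_pow_right₀ hY (by norm_num))
  have hthird : k ^ 2 / (Y ^ 5) ^ 6 ≤ 1 / Y ^ 2 := by
    calc k ^ 2 / (Y ^ 5) ^ 6 ≤ (Y ^ 12) ^ 2 / (Y ^ 5) ^ 6 := by gcongr
      _ = 1 / Y ^ 6 := by field_simp
      _ ≤ 1 / Y ^ 2 := one_div_le_one_div_of_le (by positivity)
        (pow_le_pow_right₀ hY (by norm_num))
  have : 0 < 1 / Y ^ 2 := by positivity
  rw [div_eq_mul_one_div 57, div_eq_mul_one_div 300]
  linarith

/-- `p(N - k)`, read as `0` when `N < k`. -/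
noncomputable def numPartitionsSub (N k : ℕ) : ℝ := if k ≤ N then numPartitions (N - k) else 0

lemma numPartitionsSub_nonneg (N k : ℕ) : 0 ≤ numPartitionsSub N k := by
  unfold numPartitionsSub
  split_ifs
  exacts [numPartitions_nonneg _, le_rfl]

lemma numPartitionsSub_antitone (N : ℕ) : Antitone (numPartitionsSub N) := fun k l hkl => by
  rcases le_or_gt l N with hl | hl
  · rw [numPartitionsSub, numPartitionsSub, if_pos hl, if_pos (hkl.trans hl)]
    exact numPartitions_monotone (Nat.sub_le_sub_left hkl N)
  · rw [numPartitionsSub, if_neg hl.not_ge]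
    exact numPartitionsSub_nonneg N k

lemma abs_numPartitionsSub_sub_le_of_le {N k : ℕ} (hN : 1000 ≤ twentiethRoot N)
    (hk : (k : ℝ) ≤ twentiethRoot N ^ 12) :
    |numPartitionsSub N k - numPartitions N * Real.exp (-(decayRate N * k))| ≤
      numPartitions N * (600 / twentiethRoot N ^ 2 *
        Real.exp (-(decayRate N * k))) := by
  have hlog := abs_log_numPartitions_sub_add_le (by linarith) hk
  have hkN : k ≤ N := by linarith [two_mul_le_of_le_twentiethRoot_pow (by linarith) hk]
  have hp := numPartitions_pos N
  set t := decayRate N * k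
  set δ := Real.log (numPartitions (N - k)) - Real.log (numPartitions N) + t with hδ
  have hratio : numPartitionsSub N k = numPartitions N * Real.exp (-t) * Real.exp δ := by
    rw [numPartitionsSub, if_pos hkN, mul_assoc, ← Real.exp_add, hδ, neg_add_cancel_comm_assoc,
      Real.exp_sub, Real.exp_log (numPartitions_pos _), Real.exp_log hp, mul_div_cancel₀ _ hp.ne']
  have hsmall : 300 / twentiethRoot N ^ 2 ≤ 1 := by
    rw [div_le_one (by positivity)]
    nlinarith
  calc |numPartitionsSub N k - numPartitions N * Real.exp (-t)|
      = numPartitions N * Real.exp (-t) * |Real.exp δ - 1| := by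
        rw [hratio, ← mul_sub_one, abs_mul, abs_of_pos (by positivity)]
    _ ≤ numPartitions N * Real.exp (-t) * (2 * (300 / twentiethRoot N ^ 2)) := by
        gcongr
        linarith [Real.abs_exp_sub_one_le (hlog.trans hsmall)]
    _ = numPartitions N * (600 / twentiethRoot N ^ 2 * Real.exp (-t)) := by ring

lemma exp_neg_decayRate_mul_le {N : ℕ} {x : ℝ} (hN : 1000 ≤ twentiethRoot N)
    (hexp : 10 * twentiethRoot N ^ 100 ≤ Real.exp (twentiethRoot N))
    (hx : twentiethRoot N ^ 12 - 1 ≤ x) :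
    Real.exp (-(decayRate N * x)) ≤ 1 / twentiethRoot N ^ 60 / 3 := by
  unfold decayRate
  generalize twentiethRoot N = Y at *
  have hpow : 1 ≤ Y ^ 10 := one_le_pow₀ (by linarith)
  have hle : Y ≤ γ / Y ^ 10 * x := by
    calc Y ≤ 1 * (Y ^ 2 - 1) := by nlinarith
      _ ≤ γ * ((Y ^ 12 - 1) / Y ^ 10) := by
        refine mul_le_mul (by linarith [partitionGrowth_gt]) ?_ (by nlinarith)
          partitionGrowth_pos.le
        rw [le_div_iff₀ (by positivity)]
        nlinarith
      _ ≤ γ * (x / Y ^ 10) := by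
        have := partitionGrowth_pos
        gcongr
      _ = γ / Y ^ 10 * x := by ring
  calc Real.exp (-(γ / Y ^ 10 * x)) ≤ Real.exp (-Y) := Real.exp_le_exp.2 (neg_le_neg hle)
    _ = 1 / Real.exp Y := by rw [Real.exp_neg, one_div]
    _ ≤ 1 / (3 * Y ^ 60) := by
      refine one_div_le_one_div_of_le (by positivity) (le_trans ?_ hexp)
      gcongr
      · norm_num
      · linarith
      · norm_num
    _ = 1 / Y ^ 60 / 3 := by field_simp

lemma abs_numPartitionsSub_sub_le {N : ℕ} (k : ℕ) (hN : 1000 ≤ twentiethRoot N)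
    (hexp : 10 * twentiethRoot N ^ 100 ≤ Real.exp (twentiethRoot N)) :
    |numPartitionsSub N k - numPartitions N * Real.exp (-(decayRate N * k))| ≤
      numPartitions N * (600 / twentiethRoot N ^ 2 *
        Real.exp (-(decayRate N * k)) + 1 / twentiethRoot N ^ 60) := by
  have hp := numPartitions_pos N
  have hY60 : 0 < 1 / twentiethRoot N ^ 60 := by positivity
  by_cases hk : (k : ℝ) ≤ twentiethRoot N ^ 12
  · refine (abs_numPartitionsSub_sub_le_of_le hN hk).trans ?_
    gcongr
    linarith
  set K := ⌊twentiethRoot N ^ 12⌋₊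
  have hK : (K : ℝ) ≤ twentiethRoot N ^ 12 := Nat.floor_le (by positivity)
  have hK' : twentiethRoot N ^ 12 < K + 1 := Nat.lt_floor_add_one _
  have hKk : K ≤ k := by
    have : (K : ℝ) < k := by linarith
    exact_mod_cast this.le
  have hexp_k := exp_neg_decayRate_mul_le hN hexp (x := k) (by linarith)
  have hexp_K := exp_neg_decayRate_mul_le hN hexp (x := K) (by linarith)
  have hsmall : 600 / twentiethRoot N ^ 2 ≤ 1 := by
    rw [div_le_one (by positivity)]
    nlinarith
  have hnear := (abs_le.1 (abs_numPartitionsSub_sub_le_of_le hN hK)).2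
  have hanti := numPartitionsSub_antitone N hKk
  have hnonneg := numPartitionsSub_nonneg N k
  have hw : 0 < Real.exp (-(decayRate N * k)) := Real.exp_pos _
  generalize Real.exp (-(decayRate N * k)) = w at *
  have hw_K : 0 < Real.exp (-(decayRate N * K)) := Real.exp_pos _
  generalize Real.exp (-(decayRate N * K)) = w_K at *
  have hp_w : numPartitions N * w ≤ numPartitions N * (1 / twentiethRoot N ^ 60 / 3) := by gcongr
  have hp_wK : numPartitions N * w_K ≤ numPartitions N * (1 / twentiethRoot N ^ 60 / 3) := by
    gcongr
  have hnear' : numPartitions N * (600 / twentiethRoot N ^ 2 * w_K)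
      ≤ numPartitions N * (1 / twentiethRoot N ^ 60 / 3) := by
    rw [← one_mul (1 / twentiethRoot N ^ 60 / 3)]
    gcongr
  have : 0 ≤ numPartitions N * (600 / twentiethRoot N ^ 2 * w) := by positivity
  have : 0 ≤ numPartitions N * w := by positivity
  rw [mul_add, abs_le]
  constructor <;> linarith

end LocalRatio

section DurfeeTail

open Finset PowerSeries

/-- The power series `f` has nonnegative coefficients and converges at `q` with sum `v`. -/
def HasNonnegEval (q : ℝ) (f : ℝ⟦X⟧) (v : ℝ) : Prop :=
  (∀ n, 0 ≤ coeff n f) ∧ HasSum (fun n => coeff n f * q ^ n) v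

section Eval

variable {q : ℝ} {f g : ℝ⟦X⟧} {v w : ℝ}

lemma HasNonnegEval.summable_norm (hf : HasNonnegEval q f v) (hq : 0 ≤ q) :
    Summable fun n => ‖coeff n f * q ^ n‖ := by
  simpa only [Real.norm_of_nonneg (mul_nonneg (hf.1 _) (pow_nonneg hq _))] using hf.2.summable

lemma HasNonnegEval.mul (hf : HasNonnegEval q f v) (hg : HasNonnegEval q g w) (hq : 0 ≤ q) :
    HasNonnegEval q (f * g) (v * w) := by
  refine ⟨coeff_mul_nonneg hf.1 hg.1, ?_⟩
  have hf' := hf.summable_norm hq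
  have hg' := hg.summable_norm hq
  have hcauchy (n : ℕ) : coeff n (f * g) * q ^ n = ∑ x ∈ HasAntidiagonal.antidiagonal n,
      coeff x.1 f * q ^ x.1 * (coeff x.2 g * q ^ x.2) := by
    rw [coeff_mul, sum_mul]
    refine sum_congr rfl fun x hx => ?_
    rw [← HasAntidiagonal.mem_antidiagonal.1 hx, pow_add]
    ring
  rw [← hf.2.tsum_eq, ← hg.2.tsum_eq,
    tsum_mul_tsum_eq_tsum_sum_antidiagonal_of_summable_norm hf' hg']
  simp only [hcauchy]
  exact (summable_norm_sum_mul_antidiagonal_of_summable_norm hf' hg').of_norm.hasSum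

lemma hasNonnegEval_X_pow (m : ℕ) : HasNonnegEval q (X ^ m) (q ^ m) := by
  refine ⟨coeff_X_pow_nonneg m, ?_⟩
  convert hasSum_ite_eq m (q ^ m) using 2 with n
  rw [coeff_X_pow, ite_mul, one_mul, zero_mul]
  split_ifs with h
  exacts [h ▸ rfl, rfl]

lemma hasNonnegEval_inv_one_sub_X_pow (hq : 0 ≤ q) (hq1 : q < 1) {m : ℕ} (hm : m ≠ 0) :
    HasNonnegEval q (1 - X ^ m)⁻¹ (1 - q ^ m)⁻¹ := by
  have hcoeff := coeff_inv_one_sub_X_pow (K := ℝ) hm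
  refine ⟨fun n => by rw [hcoeff]; positivity, ?_⟩
  have hinj : Function.Injective (m * ·) := mul_right_injective₀ hm
  rw [← hinj.hasSum_iff fun n hn => ?_]
  · simpa [Function.comp_def, hcoeff, pow_mul] using
      hasSum_geometric_of_lt_one (pow_nonneg hq m) (pow_lt_one₀ hq hq1 hm)
  · rw [hcoeff, if_neg (fun ⟨j, hj⟩ => hn ⟨j, hj.symm⟩), zero_mul]

end Eval

/-- The `q`-Pochhammer symbol `(q; q)_k = (1 - q) (1 - q ^ 2) ⋯ (1 - q ^ k)`. -/
noncomputable def qPochhammer (q : ℝ) (k : ℕ) : ℝ := ∏ m ∈ range k, (1 - q ^ (m + 1))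

lemma qPochhammer_succ (q : ℝ) (k : ℕ) :
    qPochhammer q (k + 1) = qPochhammer q k * (1 - q ^ (k + 1)) :=
  prod_range_succ _ _

/-- The value at `q` of the generating function of `durfeeCount l a`. -/
noncomputable def durfeeTerm (q : ℝ) (l a : ℕ) : ℝ :=
  q ^ (a * (a + l)) * ((qPochhammer q a)⁻¹ * (qPochhammer q (a + l))⁻¹)

section Pochhammer

variable {q : ℝ} (hq : 0 ≤ q) (hq1 : q < 1)

include hq hq1

lemma one_sub_pow_succ_pos (k : ℕ) : 0 < 1 - q ^ (k + 1) :=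
  sub_pos.2 (pow_lt_one₀ hq hq1 k.succ_ne_zero)

lemma qPochhammer_pos (k : ℕ) : 0 < qPochhammer q k :=
  prod_pos fun m _ => one_sub_pow_succ_pos hq hq1 m

lemma hasNonnegEval_invQFactorial (k : ℕ) :
    HasNonnegEval q (invQFactorial ℝ k) (qPochhammer q k)⁻¹ := by
  induction k with
  | zero => simpa [qPochhammer] using hasNonnegEval_X_pow (q := q) 0
  | succ k ih =>
    rw [invQFactorial_succ, qPochhammer_succ, mul_inv]
    exact ih.mul (hasNonnegEval_inv_one_sub_X_pow hq hq1 k.succ_ne_zero) hq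

lemma hasSum_durfeeCount_mul_pow (l a : ℕ) :
    HasSum (fun n => durfeeCount l a n * q ^ n) (durfeeTerm q l a) :=
  ((hasNonnegEval_X_pow _).mul ((hasNonnegEval_invQFactorial hq hq1 a).mul
    (hasNonnegEval_invQFactorial hq hq1 (a + l)) hq) hq).2

lemma durfeeTerm_le_of_forall_inv_qPochhammer_le {C : ℝ} (hC : ∀ M, (qPochhammer q M)⁻¹ ≤ C)
    (l a : ℕ) : durfeeTerm q l a ≤ C := by
  refine le_of_tendsto' (hasSum_durfeeCount_mul_pow hq hq1 l a).tendsto_sum_nat fun M => ?_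
  obtain ⟨hnonneg, hsum⟩ := hasNonnegEval_invQFactorial hq hq1 M
  calc ∑ n ∈ range M, durfeeCount l a n * q ^ n
      ≤ ∑ n ∈ range M, coeff n (invQFactorial ℝ M) * q ^ n := by
        refine sum_le_sum fun n hn => ?_
        rw [coeff_invQFactorial_of_le (Finset.mem_range.1 hn).le]
        gcongr
        exact durfeeCount_le_numPartitions l a n
    _ ≤ (qPochhammer q M)⁻¹ :=
        sum_le_hasSum _ (fun n _ => mul_nonneg (hnonneg n) (pow_nonneg hq n)) hsum
    _ ≤ C := hC M

lemma durfeeTerm_succ_mul (l j : ℕ) :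
    durfeeTerm q l (j + 1) * ((1 - q ^ (j + 1)) * (1 - q ^ (j + 1) * q ^ l)) * q
      = durfeeTerm q l j * ((q ^ (j + 1)) ^ 2 * q ^ l) := by
  have hj := (one_sub_pow_succ_pos hq hq1 j).ne'
  have hjl := (one_sub_pow_succ_pos hq hq1 (j + l)).ne'
  have hP := (qPochhammer_pos hq hq1 j).ne'
  have hPl := (qPochhammer_pos hq hq1 (j + l)).ne'
  rw [durfeeTerm, durfeeTerm, show j + 1 + l = j + l + 1 by ring, qPochhammer_succ,
    qPochhammer_succ, show q ^ (j + 1) * q ^ l = q ^ (j + l + 1) by ring]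
  field_simp
  ring

end Pochhammer

lemma mul_sum_pow_exp_neg_le {s : ℝ} (hs : 0 < s) (M : ℕ) :
    Real.exp (-s) * ∑ m ∈ range M, Real.exp (-s) ^ m ≤ 1 / s := by
  have hp1 : Real.exp (-s) < 1 := Real.exp_lt_one_iff.2 (by linarith)
  have hsp : s * Real.exp (-s) ≤ 1 - Real.exp (-s) := by
    have hinv : Real.exp (-s) * Real.exp s = 1 := by rw [← Real.exp_add]; simp
    nlinarith [Real.add_one_le_exp s, Real.exp_pos (-s)]
  calc Real.exp (-s) * ∑ m ∈ range M, Real.exp (-s) ^ m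
      ≤ Real.exp (-s) * (1 - Real.exp (-s))⁻¹ := by
        gcongr
        exact sum_le_hasSum _ (fun i _ => by positivity)
          (hasSum_geometric_of_lt_one (Real.exp_pos _).le hp1)
    _ ≤ 1 / s := by
        rw [← div_eq_mul_inv, div_le_div_iff₀ (by linarith) hs]
        linarith

/- Expand the logarithms in powers of `exp (-t)`; the `n`-th coefficient sum is at most
`1 / (n ^ 2 * t)`, and `γ ^ 2 = ζ(2)`. -/
lemma inv_qPochhammer_exp_neg_le {t : ℝ} (ht : 0 < t) (M : ℕ) :
    (qPochhammer (Real.exp (-t)) M)⁻¹ ≤ Real.exp (γ ^ 2 / t) := by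
  have hq := (Real.exp_pos (-t)).le
  have hq1 : Real.exp (-t) < 1 := Real.exp_lt_one_iff.2 (by linarith)
  rw [← Real.log_le_iff_le_exp (inv_pos.2 (qPochhammer_pos hq hq1 M)), Real.log_inv, qPochhammer,
    Real.log_prod fun m _ => (one_sub_pow_succ_pos hq hq1 m).ne', ← sum_neg_distrib]
  have htaylor : HasSum (fun n : ℕ => ∑ m ∈ range M, (Real.exp (-t) ^ (m + 1)) ^ (n + 1) / (n + 1))
      (∑ m ∈ range M, -Real.log (1 - Real.exp (-t) ^ (m + 1))) := by
    refine hasSum_sum fun m _ => Real.hasSum_pow_div_log_of_abs_lt_one ?_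
    rw [abs_of_nonneg (by positivity)]
    exact sub_pos.1 (one_sub_pow_succ_pos hq hq1 m)
  have hzeta : HasSum (fun n : ℕ => 1 / ((n : ℝ) + 1) ^ 2 / t) (γ ^ 2 / t) := by
    have := (hasSum_nat_add_iff' (f := fun n : ℕ => 1 / (n : ℝ) ^ 2) 1).mpr hasSum_zeta_two
    rw [partitionGrowth_sq]
    exact HasSum.div_const (by simpa using this) t
  refine hasSum_le (fun n => ?_) htaylor hzeta
  have hgeom := mul_sum_pow_exp_neg_le (s := (n + 1) * t) (by positivity) M
  have hpow (m : ℕ) : (Real.exp (-t) ^ (m + 1)) ^ (n + 1)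
      = Real.exp (-((n + 1) * t)) * Real.exp (-((n + 1) * t)) ^ m := by
    simp only [← Real.exp_nat_mul, ← Real.exp_add]
    push_cast
    ring_nf
  calc ∑ m ∈ range M, (Real.exp (-t) ^ (m + 1)) ^ (n + 1) / ((n : ℝ) + 1)
      = Real.exp (-((n + 1) * t)) * ∑ m ∈ range M, Real.exp (-((n + 1) * t)) ^ m / (n + 1) := by
        simp only [hpow, mul_sum, mul_div_assoc]
    _ ≤ 1 / ((n + 1) * t) / (n + 1) := by
        rw [← sum_div, ← mul_div_assoc]
        gcongr
    _ = 1 / ((n : ℝ) + 1) ^ 2 / t := by field_simp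

/-- `durfeeTerm` divided by the Gaussian of width `t ^ (-1 / 2)` centred at `x`. With `x` the
saddle point, it is unimodal in `a` with its maximum at `⌊x⌋`. -/
noncomputable def durfeeWeight (t x : ℝ) (l a : ℕ) : ℝ :=
  durfeeTerm (Real.exp (-t)) l a * Real.exp (t * (a - x) ^ 2)

section Saddle

variable {t x : ℝ} {l : ℕ}

lemma exp_neg_pow_succ (t : ℝ) (j : ℕ) :
    Real.exp (-t) ^ (j + 1) = Real.exp (-(t * (j + 1))) := by
  rw [← Real.exp_nat_mul]
  push_cast
  ring_nf

lemma one_sub_mul_one_sub_mul_pos {v w : ℝ} (hw0 : 0 < w) (hw1 : w ≤ 1) (hv : v < 1) :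
    0 < (1 - v) * (1 - v * w) :=
  mul_pos (by linarith) (by nlinarith)

lemma one_sub_mul_one_sub_mul_le {u v w : ℝ} (huv : u ≤ v) (hw0 : 0 ≤ w) (hw1 : w ≤ 1)
    (hv : v ≤ 1) : (1 - v) * (1 - v * w) ≤ (1 - u) * (1 - u * w) := by
  have : u * w ≤ v * w := by gcongr
  exact mul_le_mul (by linarith) (by linarith) (by nlinarith) (by linarith)

lemma exp_neg_mem_Ioo (ht : 0 < t) : Real.exp (-t) ∈ Set.Ioo 0 1 :=
  ⟨Real.exp_pos _, Real.exp_lt_one_iff.2 (by linarith)⟩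

lemma durfeeWeight_nonneg (ht : 0 < t) (l a : ℕ) : 0 ≤ durfeeWeight t x l a := by
  obtain ⟨hq, hq1⟩ := exp_neg_mem_Ioo ht
  have hP := qPochhammer_pos hq.le hq1
  have := hP a
  have := hP (a + l)
  unfold durfeeWeight durfeeTerm
  positivity

variable (ht : 0 < t) (hx : Real.exp (-(t * x)) * (1 + Real.exp (-t) ^ l) = 1)

include ht hx

/- By the saddle point equation, the two factors agree at `j + 1 = x`. -/
lemma durfeeWeight_succ_mul (j : ℕ) :
    durfeeWeight t x l (j + 1)
        * ((1 - Real.exp (-t) ^ (j + 1)) * (1 - Real.exp (-t) ^ (j + 1) * Real.exp (-t) ^ l))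
      = durfeeWeight t x l j
        * ((1 - Real.exp (-(t * x))) * (1 - Real.exp (-(t * x)) * Real.exp (-t) ^ l)) := by
  obtain ⟨hq, hq1⟩ := exp_neg_mem_Ioo ht
  have hterm := durfeeTerm_succ_mul hq.le hq1 l j
  have hgauss : Real.exp (t * ((j + 1 : ℕ) - x) ^ 2) * (Real.exp (-t) ^ (j + 1)) ^ 2
      = Real.exp (t * (j - x) ^ 2) * Real.exp (-(t * x)) ^ 2 * Real.exp (-t) := by
    simp only [← Real.exp_nat_mul, ← Real.exp_add]
    push_cast
    ring_nf
  unfold durfeeWeight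
  set q := Real.exp (-t)
  set u := Real.exp (-(t * x))
  have hsaddle : (1 - u) * (1 - u * q ^ l) = u ^ 2 * q ^ l := by
    linear_combination -hx
  rw [hsaddle]
  have hne : (q ^ (j + 1)) ^ 2 * q ≠ 0 := by positivity
  refine mul_right_cancel₀ hne ?_
  linear_combination (Real.exp (t * ((j + 1 : ℕ) - x) ^ 2) * (q ^ (j + 1)) ^ 2) * hterm
    + (durfeeTerm q l j * (q ^ (j + 1)) ^ 2 * q ^ l) * hgauss

lemma durfeeWeight_le_succ {j : ℕ} (hj : (j : ℝ) + 1 ≤ x) :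
    durfeeWeight t x l j ≤ durfeeWeight t x l (j + 1) := by
  obtain ⟨hq, hq1⟩ := exp_neg_mem_Ioo ht
  have hw1 : Real.exp (-t) ^ l ≤ 1 := pow_le_one₀ hq.le hq1.le
  have hv1 := sub_pos.1 (one_sub_pow_succ_pos hq.le hq1 j)
  have huv : Real.exp (-(t * x)) ≤ Real.exp (-t) ^ (j + 1) := by
    rw [exp_neg_pow_succ, Real.exp_le_exp]
    nlinarith
  refine le_of_mul_le_mul_right ?_ (one_sub_mul_one_sub_mul_pos (pow_pos hq l) hw1 hv1)
  rw [durfeeWeight_succ_mul ht hx]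
  exact mul_le_mul_of_nonneg_left
    (one_sub_mul_one_sub_mul_le huv (pow_nonneg hq.le l) hw1 hv1.le) (durfeeWeight_nonneg ht l j)

lemma durfeeWeight_succ_le {j : ℕ} (hj : x ≤ j + 1) :
    durfeeWeight t x l (j + 1) ≤ durfeeWeight t x l j := by
  obtain ⟨hq, hq1⟩ := exp_neg_mem_Ioo ht
  have hw0 : 0 < Real.exp (-t) ^ l := pow_pos hq l
  have hw1 : Real.exp (-t) ^ l ≤ 1 := pow_le_one₀ hq.le hq1.le
  have hv1 := sub_pos.1 (one_sub_pow_succ_pos hq.le hq1 j)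
  have hu1 : Real.exp (-(t * x)) ≤ 1 := by nlinarith [Real.exp_pos (-(t * x))]
  have hvu : Real.exp (-t) ^ (j + 1) ≤ Real.exp (-(t * x)) := by
    rw [exp_neg_pow_succ, Real.exp_le_exp]
    nlinarith
  refine le_of_mul_le_mul_right ?_ (one_sub_mul_one_sub_mul_pos hw0 hw1 hv1)
  rw [durfeeWeight_succ_mul ht hx]
  exact mul_le_mul_of_nonneg_left
    (one_sub_mul_one_sub_mul_le hvu hw0.le hw1 hu1) (durfeeWeight_nonneg ht l j)

lemma durfeeWeight_le_floor (hx0 : 0 ≤ x) (a : ℕ) :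
    durfeeWeight t x l a ≤ durfeeWeight t x l ⌊x⌋₊ := by
  rcases le_total a ⌊x⌋₊ with h | h
  · induction h using Nat.decreasingInduction with
    | self => exact le_rfl
    | of_succ j hj ih =>
      exact (durfeeWeight_le_succ ht hx (by exact_mod_cast (Nat.le_floor_iff hx0).1 hj)).trans ih
  · induction a, h using Nat.le_induction with
    | base => exact le_rfl
    | succ j hj ih =>
      refine (durfeeWeight_succ_le ht hx ?_).trans ih
      exact (Nat.lt_floor_add_one x).le.trans (by exact_mod_cast Nat.succ_le_succ hj)

lemma durfeeTerm_mul_exp_le (hx0 : 0 ≤ x) (a : ℕ) :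
    durfeeTerm (Real.exp (-t)) l a * Real.exp (t * (a - x) ^ 2) ≤ Real.exp (γ ^ 2 / t + t) := by
  obtain ⟨hq, hq1⟩ := exp_neg_mem_Ioo ht
  refine (durfeeWeight_le_floor ht hx hx0 a).trans ?_
  have hfloor : t * ((⌊x⌋₊ : ℝ) - x) ^ 2 ≤ t := by
    have hle := Nat.floor_le hx0
    have hlt := Nat.lt_floor_add_one x
    exact mul_le_of_le_one_right ht.le (by nlinarith)
  rw [durfeeWeight, Real.exp_add]
  gcongr
  exact durfeeTerm_le_of_forall_inv_qPochhammer_le hq.le hq1 (inv_qPochhammer_exp_neg_le ht) l _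

lemma durfeeCount_le_exp (hx0 : 0 ≤ x) (a n : ℕ) :
    durfeeCount l a n ≤ Real.exp (t * n + (γ ^ 2 / t + t) - t * (a - x) ^ 2) := by
  obtain ⟨hq, hq1⟩ := exp_neg_mem_Ioo ht
  have hcoeff : durfeeCount l a n * Real.exp (-t) ^ n ≤ durfeeTerm (Real.exp (-t)) l a :=
    le_hasSum (hasSum_durfeeCount_mul_pow hq.le hq1 l a) n
      fun i _ => mul_nonneg (durfeeCount_nonneg l a i) (pow_nonneg hq.le i)
  have hpow : Real.exp (-t) ^ n = (Real.exp (t * n))⁻¹ := by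
    rw [← Real.exp_nat_mul, ← Real.exp_neg]
    ring_nf
  rw [hpow, ← div_eq_mul_inv, div_le_iff₀ (Real.exp_pos _)] at hcoeff
  rw [Real.exp_sub, le_div_iff₀ (Real.exp_pos _), Real.exp_add]
  calc durfeeCount l a n * Real.exp (t * (a - x) ^ 2)
      ≤ durfeeTerm (Real.exp (-t)) l a * Real.exp (t * n) * Real.exp (t * (a - x) ^ 2) := by gcongr
    _ = Real.exp (t * n)
        * (durfeeTerm (Real.exp (-t)) l a * Real.exp (t * (a - x) ^ 2)) := by ring
    _ ≤ Real.exp (t * n) * Real.exp (γ ^ 2 / t + t) := by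
        gcongr
        exact durfeeTerm_mul_exp_le ht hx hx0 a

end Saddle

lemma saddle_exponent_le {Y n d : ℝ} (hY : 1000 ≤ Y) (hn : n ≤ Y ^ 20) (hd : Y ^ 8 ≤ |d|) :
    γ / Y ^ 10 * n + (γ ^ 2 / (γ / Y ^ 10) + γ / Y ^ 10) - γ / Y ^ 10 * d ^ 2
      ≤ 2 * γ * Y ^ 10 - 160 * Y ^ 5 - Y := by
  have hγ := partitionGrowth_pos
  have hlinear : γ / Y ^ 10 * n ≤ γ * Y ^ 10 := by
    calc γ / Y ^ 10 * n ≤ γ / Y ^ 10 * Y ^ 20 := by gcongr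
      _ = γ * Y ^ 10 := by field_simp
  have hinv : γ ^ 2 / (γ / Y ^ 10) = γ * Y ^ 10 := by field_simp
  have hpow {m n : ℕ} (h : m ≤ n) : Y ^ m ≤ Y ^ n := pow_le_pow_right₀ (by linarith) h
  have hsmall : γ / Y ^ 10 ≤ Y := by
    rw [div_le_iff₀ (by positivity), ← pow_succ']
    linarith [partitionGrowth_lt, hpow (show 1 ≤ 10 + 1 by norm_num), pow_one Y]
  have hgauss : 1000 * Y ^ 5 ≤ γ / Y ^ 10 * d ^ 2 := by
    calc 1000 * Y ^ 5 ≤ Y * Y ^ 5 := by gcongr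
      _ = 1 * (Y * Y ^ 5) := (one_mul _).symm
      _ ≤ γ * (Y * Y ^ 5) := by
        gcongr
        linarith [partitionGrowth_gt]
      _ = γ / Y ^ 10 * (Y ^ 8) ^ 2 := by field_simp
      _ ≤ γ / Y ^ 10 * d ^ 2 := by
        rw [← sq_abs d]
        gcongr
  linarith [hpow (show 1 ≤ 5 by norm_num), pow_one Y]

lemma exp_neg_le_one_div_pow {Y : ℝ} (hY : 1 ≤ Y) (hexp : 10 * Y ^ 100 ≤ Real.exp Y) :
    Real.exp (-Y) ≤ 1 / Y ^ 80 := by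
  have hpow : Y ^ 80 ≤ Y ^ 100 := pow_le_pow_right₀ hY (by norm_num)
  rw [Real.exp_neg, ← one_div]
  exact one_div_le_one_div_of_le (by positivity) (by linarith [pow_pos (one_pos.trans_le hY) 100])

lemma durfeeCount_le_of_far {N n l a : ℕ} {x : ℝ} (hN : 1000 ≤ twentiethRoot N)
    (hexp : 10 * twentiethRoot N ^ 100 ≤ Real.exp (twentiethRoot N)) (hx0 : 0 ≤ x)
    (hx : Real.exp (-(decayRate N * x)) * (1 + Real.exp (-decayRate N) ^ l) = 1)
    (hn : n ≤ N) (ha : twentiethRoot N ^ 8 ≤ |a - x|) :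
    durfeeCount l a n ≤ numPartitions N * (1 / twentiethRoot N ^ 80) := by
  have hN20 : 2560000 ≤ N := by
    have : (2560000 : ℝ) ≤ N := by
      calc (2560000 : ℝ) ≤ 1000 ^ 20 := by norm_num
        _ ≤ twentiethRoot N ^ 20 := by gcongr
        _ = N := twentiethRoot_pow N
    exact_mod_cast this
  have hp := le_log_numPartitions hN20
  rw [fourthRoot_eq_twentiethRoot_pow, ← pow_mul, show 5 * 2 = 10 by rfl] at hp
  have hnY : (n : ℝ) ≤ twentiethRoot N ^ 20 := by
    rw [twentiethRoot_pow]
    exact_mod_cast hn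
  have ht : 0 < decayRate N := decayRate_pos (by linarith)
  have hexponent := saddle_exponent_le hN hnY ha
  rw [← decayRate] at hexponent
  calc durfeeCount l a n
      ≤ Real.exp (Real.log (numPartitions N) + -twentiethRoot N) :=
        (durfeeCount_le_exp ht hx hx0 a n).trans <| Real.exp_le_exp.2 (by linarith)
    _ = numPartitions N * Real.exp (-twentiethRoot N) := by
        rw [Real.exp_add, Real.exp_log (numPartitions_pos N)]
    _ ≤ numPartitions N * (1 / twentiethRoot N ^ 80) :=
        mul_le_mul_of_nonneg_left (exp_neg_le_one_div_pow (by linarith) hexp)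
          (numPartitions_nonneg N)

end DurfeeTail

section Sandwich

open Finset

variable {l a N : ℕ}

lemma durfeeCountSub_nonneg (l a N k : ℕ) : 0 ≤ durfeeCountSub l a N k := by
  unfold durfeeCountSub
  split_ifs
  exacts [durfeeCount_nonneg l a _, le_rfl]

lemma durfeeCountSub_antitone (h : 1 ≤ a + l) : Antitone (durfeeCountSub l a N) :=
  fun k k' hk => by
  rcases le_or_gt k' N with hN | hN
  · rw [durfeeCountSub, durfeeCountSub, if_pos hN, if_pos (hk.trans hN)]
    exact durfeeCount_mono h (Nat.sub_le_sub_left hk N)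
  · rw [durfeeCountSub_eq_zero_of_lt _ _ hN]
    exact durfeeCountSub_nonneg l a N k

lemma sum_durfeeCountSub (l N k : ℕ) :
    ∑ a ∈ range (N + 1), durfeeCountSub l a N k = numPartitionsSub N k := by
  unfold durfeeCountSub numPartitionsSub
  split_ifs
  exacts [sum_durfeeCount l (Nat.sub_le N k), sum_const_zero]

lemma durfeeCountSub_le {C : ℝ} (hC : 0 ≤ C) (h : ∀ n ≤ N, durfeeCount l a n ≤ C) (k : ℕ) :
    durfeeCountSub l a N k ≤ C := by
  unfold durfeeCountSub
  split_ifs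
  exacts [h _ (Nat.sub_le N k), hC]

/- For `α ≤ a` the part `a + c * (2 * a + l + 1)` is at least its value at `α`, and by
`sum_durfeeCountSub` freezing it there makes the sum over `a` collapse. -/
lemma sum_durfeeCountSub_le_sum_numPartitionsSub {α : ℕ} {C : ℝ} (hC : 0 ≤ C)
    (h : ∀ a < α, ∀ n ≤ N, durfeeCount l a n ≤ C) (hα : 1 ≤ α + l) :
    ∑ a ∈ range (N + 1), ∑ c ∈ range (N + 1), durfeeCountSub l a N (a + c * (2 * a + l + 1)) ≤
      ∑ c ∈ range (N + 1), (numPartitionsSub N (α + c * (2 * α + l + 1)) + (N + 1) * C) := by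
  rw [sum_comm]
  refine sum_le_sum fun c _ => ?_
  have hconst : ((N : ℝ) + 1) * C = ∑ _a ∈ range (N + 1), C := by simp
  rw [← sum_durfeeCountSub l, hconst, ← sum_add_distrib]
  refine sum_le_sum fun a _ => ?_
  rcases lt_or_ge a α with ha | ha
  · exact le_add_of_nonneg_of_le (durfeeCountSub_nonneg _ _ _ _) (durfeeCountSub_le hC (h a ha) _)
  · exact le_add_of_le_of_nonneg (durfeeCountSub_antitone (by omega) (by gcongr)) hC

lemma sum_numPartitionsSub_le_sum_durfeeCountSub {α β : ℕ} {C : ℝ} (hC : 0 ≤ C)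
    (h : ∀ a, (a < α ∨ β < a) → ∀ n ≤ N, durfeeCount l a n ≤ C) (hα : 1 ≤ α + l) :
    ∑ c ∈ range (N + 1), (numPartitionsSub N (β + c * (2 * β + l + 1)) - (N + 1) * C) ≤
      ∑ a ∈ range (N + 1), ∑ c ∈ range (N + 1),
        durfeeCountSub l a N (a + c * (2 * a + l + 1)) := by
  rw [sum_comm]
  refine sum_le_sum fun c _ => ?_
  have hconst : ((N : ℝ) + 1) * C = ∑ _a ∈ range (N + 1), C := by simp
  rw [← sum_durfeeCountSub l, hconst, ← sum_sub_distrib]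
  refine sum_le_sum fun a _ => sub_le_iff_le_add.2 ?_
  by_cases ha : a < α ∨ β < a
  · exact le_add_of_nonneg_of_le (durfeeCountSub_nonneg _ _ _ _) (durfeeCountSub_le hC (h a ha) _)
  · rw [not_or, not_lt, not_lt] at ha
    exact le_add_of_le_of_nonneg
      (durfeeCountSub_antitone (by omega) (by gcongr <;> exact ha.2)) hC

end Sandwich

section GeometricSum

open Finset

lemma sum_mul_pow_le {b r : ℝ} (hb : 0 ≤ b) (hr : 0 ≤ r) (hr1 : r < 1) (M : ℕ) :
    ∑ c ∈ range M, b * r ^ c ≤ b / (1 - r) := by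
  rw [← mul_sum, div_eq_mul_inv]
  gcongr
  exact sum_le_hasSum _ (fun i _ => by positivity) (hasSum_geometric_of_lt_one hr hr1)

lemma exp_neg_mul_arith_progression (t : ℝ) (a c l : ℕ) :
    Real.exp (-(t * (a + c * (2 * a + l + 1) : ℕ))) = Real.exp (-(t * a))
      * (Real.exp (-(t * a)) ^ 2 * Real.exp (-t) ^ l * Real.exp (-t)) ^ c := by
  simp only [← Real.exp_nat_mul, ← Real.exp_add]
  push_cast
  ring_nf

lemma pow_succ_le_one_div_twentiethRoot_sq {N : ℕ} {y : ℝ} (hN : 1 ≤ twentiethRoot N)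
    (hy0 : 0 ≤ y) (hy : y ≤ 1 / 4) : y ^ (N + 1) ≤ 1 / twentiethRoot N ^ 2 := by
  have hlin : ((N + 1 : ℕ) : ℝ) ≤ 2 ^ (N + 1) := by exact_mod_cast Nat.lt_two_pow_self.le
  calc y ^ (N + 1) ≤ (1 / 4) ^ (N + 1) := by gcongr
    _ = 1 / 4 ^ (N + 1) := one_div_pow _ _
    _ ≤ 1 / twentiethRoot N ^ 2 := by
      refine one_div_le_one_div_of_le (by positivity) ?_
      calc twentiethRoot N ^ 2 ≤ twentiethRoot N ^ 20 := pow_le_pow_right₀ hN (by norm_num)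
        _ ≤ (N + 1 : ℕ) := by
          rw [twentiethRoot_pow]
          exact_mod_cast N.le_succ
        _ ≤ 2 ^ (N + 1) := hlin
        _ ≤ 4 ^ (N + 1) := by
          gcongr
          norm_num

variable {N l a : ℕ} {b : ℝ} (hN : 1000 ≤ twentiethRoot N)
  (hexp : 10 * twentiethRoot N ^ 100 ≤ Real.exp (twentiethRoot N))

include hN hexp

lemma sum_numPartitionsSub_le (hb : Real.exp (-(decayRate N * a)) ≤ b)
    (hb1 : b ^ 2 * Real.exp (-decayRate N) ^ l < 1) :
    ∑ c ∈ range (N + 1), numPartitionsSub N (a + c * (2 * a + l + 1)) ≤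
      numPartitions N * ((1 + 600 / twentiethRoot N ^ 2)
        * (b / (1 - b ^ 2 * Real.exp (-decayRate N) ^ l)) + (N + 1) / twentiethRoot N ^ 60) := by
  have hp := numPartitions_pos N
  have hq1 : Real.exp (-decayRate N) ≤ 1 :=
    Real.exp_le_one_iff.2 (neg_nonpos.2 (decayRate_pos (by linarith)).le)
  have hb0 : 0 < b := (Real.exp_pos _).trans_le hb
  have hterm (c : ℕ) : numPartitionsSub N (a + c * (2 * a + l + 1)) ≤ numPartitions N *
      ((1 + 600 / twentiethRoot N ^ 2) * (b * (b ^ 2 * Real.exp (-decayRate N) ^ l) ^ c)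
        + 1 / twentiethRoot N ^ 60) := by
    have happrox := (abs_le.1 (abs_numPartitionsSub_sub_le (a + c * (2 * a + l + 1)) hN hexp)).2
    have hgeom : Real.exp (-(decayRate N * (a + c * (2 * a + l + 1) : ℕ))) ≤
        b * (b ^ 2 * Real.exp (-decayRate N) ^ l) ^ c := by
      rw [exp_neg_mul_arith_progression]
      gcongr ?_ * ?_ ^ c
      exact (mul_le_of_le_one_right (by positivity) hq1).trans (by gcongr)
    calc _ ≤ numPartitions N * ((1 + 600 / twentiethRoot N ^ 2)
          * Real.exp (-(decayRate N * (a + c * (2 * a + l + 1) : ℕ)))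
          + 1 / twentiethRoot N ^ 60) := by linarith
      _ ≤ _ := by gcongr
  refine (sum_le_sum fun c _ => hterm c).trans ?_
  rw [← mul_sum, sum_add_distrib, ← mul_sum, sum_const, card_range, nsmul_eq_mul, mul_one_div,
    Nat.cast_add_one]
  gcongr
  exact sum_mul_pow_le hb0.le (by positivity) hb1 _

lemma le_sum_numPartitionsSub {y : ℝ} (hb0 : 0 ≤ b) (hb : b ≤ Real.exp (-(decayRate N * a)))
    (hy0 : 0 ≤ y) (hy : y ≤ 1 / 4)
    (hyb : y ≤ b ^ 2 * Real.exp (-decayRate N) ^ l * Real.exp (-decayRate N)) :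
    numPartitions N * ((1 - 600 / twentiethRoot N ^ 2)
        * (b * ((1 - 1 / twentiethRoot N ^ 2) / (1 - y))) - (N + 1) / twentiethRoot N ^ 60) ≤
      ∑ c ∈ range (N + 1), numPartitionsSub N (a + c * (2 * a + l + 1)) := by
  have hp := numPartitions_pos N
  have hsmall : 0 ≤ 1 - 600 / twentiethRoot N ^ 2 := by
    rw [sub_nonneg, div_le_one (by positivity)]
    nlinarith
  have hterm (c : ℕ) : numPartitions N * ((1 - 600 / twentiethRoot N ^ 2) * (b * y ^ c)
      - 1 / twentiethRoot N ^ 60) ≤ numPartitionsSub N (a + c * (2 * a + l + 1)) := by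
    have happrox := (abs_le.1 (abs_numPartitionsSub_sub_le (a + c * (2 * a + l + 1)) hN hexp)).1
    have hgeom : b * y ^ c ≤ Real.exp (-(decayRate N * (a + c * (2 * a + l + 1) : ℕ))) := by
      rw [exp_neg_mul_arith_progression]
      gcongr
      exact hyb.trans (by gcongr)
    calc _ ≤ numPartitions N * ((1 - 600 / twentiethRoot N ^ 2)
          * Real.exp (-(decayRate N * (a + c * (2 * a + l + 1) : ℕ)))
          - 1 / twentiethRoot N ^ 60) := by gcongr
      _ ≤ _ := by linarith
  have hsum : b * ((1 - 1 / twentiethRoot N ^ 2) / (1 - y)) ≤ ∑ c ∈ range (N + 1), b * y ^ c := by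
    rw [← mul_sum]
    gcongr
    rw [div_le_iff₀ (by linarith), geom_sum_mul_neg]
    linarith [pow_succ_le_one_div_twentiethRoot_sq (N := N) (by linarith) hy0 hy]
  refine le_trans ?_ (sum_le_sum fun c _ => hterm c)
  rw [← mul_sum, sum_sub_distrib, ← mul_sum, sum_const, card_range, nsmul_eq_mul, mul_one_div,
    Nat.cast_add_one]
  gcongr

end GeometricSum

section GeometricPerturbation

variable {u w h E : ℝ}

lemma sq_mul_le_quarter (h : u * (1 + w) = 1) : u ^ 2 * w ≤ 1 / 4 := by
  have hsq : u ^ 2 * w = u * (1 - u) := by linear_combination u * h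
  nlinarith [sq_nonneg (u - 1 / 2)]

lemma div_one_sub_sq_mul_eq (hw : 0 < w) (h : u * (1 + w) = 1) :
    u / (1 - u ^ 2 * w) = (1 + w) / (1 + w + w ^ 2) := by
  obtain rfl : u = 1 / (1 + w) := eq_one_div_of_mul_eq_one_left h
  have hden : 1 - (1 / (1 + w)) ^ 2 * w = (1 + w + w ^ 2) / (1 + w) ^ 2 := by
    field_simp
    ring
  rw [hden]
  field_simp

lemma mul_div_one_sub_sq_mul_le (hu : 0 < u) (hw : 0 < w) (huw : u ^ 2 * w ≤ 1 / 4) (h0 : 0 ≤ h)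
    (h1 : h ≤ 1 / 1000000) (hE : 1 ≤ E) (hE' : E ≤ 1 + 2 * h) :
    (u * E) ^ 2 * w < 1 ∧ (1 + 600 * h) * (u * E / (1 - (u * E) ^ 2 * w)) ≤
      u / (1 - u ^ 2 * w) * (1 + 700 * h) := by
  rw [show (u * E) ^ 2 * w = u ^ 2 * w * E ^ 2 by ring]
  have hA0 : 0 < u ^ 2 * w := by positivity
  set A := u ^ 2 * w
  have hEsq : E ^ 2 ≤ 1 + 5 * h := by nlinarith
  have hden : (1 - A) * (1 - 2 * h) ≤ 1 - A * E ^ 2 := by nlinarith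
  have hA1 : 0 < 1 - A := by linarith
  have hh : 0 < 1 - 2 * h := by linarith
  have hden_pos : 0 < (1 - A) * (1 - 2 * h) := mul_pos hA1 hh
  refine ⟨by linarith, ?_⟩
  calc (1 + 600 * h) * (u * E / (1 - A * E ^ 2))
      ≤ (1 + 600 * h) * (u * (1 + 2 * h) / ((1 - A) * (1 - 2 * h))) := by gcongr
    _ = u / (1 - A) * ((1 + 600 * h) * (1 + 2 * h) / (1 - 2 * h)) := by field_simp
    _ ≤ u / (1 - A) * (1 + 700 * h) := by
      gcongr
      rw [div_le_iff₀ hh]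
      nlinarith

lemma le_div_div_one_sub_sq_mul (hu : 0 < u) (hw : 0 < w) (huw : u ^ 2 * w ≤ 1 / 4) (h0 : 0 ≤ h)
    (h1 : h ≤ 1 / 1000000) (hE : 1 ≤ E) (hE' : E ≤ 1 + 2 * h) :
    (u / E) ^ 2 * w / E ≤ 1 / 4 ∧ u / (1 - u ^ 2 * w) * (1 - 700 * h) ≤
      (1 - 600 * h) * (u / E * ((1 - h) / (1 - (u / E) ^ 2 * w / E))) := by
  have hE0 : 0 < E := by linarith
  have hinv_le : E⁻¹ ≤ 1 := inv_le_one_of_one_le₀ hE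
  have hinv_ge : 1 - 2 * h ≤ E⁻¹ := by
    rw [← one_div, le_div_iff₀ hE0]
    nlinarith
  have hinv_pos : 0 < E⁻¹ := by positivity
  rw [show (u / E) ^ 2 * w / E = u ^ 2 * w * E⁻¹ ^ 3 by field_simp, div_eq_mul_inv u E]
  have hA0 : 0 < u ^ 2 * w := by positivity
  set A := u ^ 2 * w
  set i := E⁻¹
  have hcube_le : i ^ 3 ≤ 1 := pow_le_one₀ hinv_pos.le hinv_le
  have hcube_ge : 1 - 6 * h ≤ i ^ 3 := by
    calc 1 - 6 * h ≤ (1 - 2 * h) ^ 3 := by nlinarith [mul_nonneg h0 h0]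
      _ ≤ i ^ 3 := by
        gcongr
        linarith
  have hAi : A * i ^ 3 ≤ A := mul_le_of_le_one_right hA0.le hcube_le
  have hden : 1 - A * i ^ 3 ≤ (1 - A) * (1 + 2 * h) := by nlinarith
  have hA1 : 0 < 1 - A := by linarith
  have hden_pos : 0 < 1 - A * i ^ 3 := by linarith
  have hh600 : 0 ≤ 1 - 600 * h := by linarith
  have hh1 : 0 ≤ 1 - h := by linarith
  refine ⟨by linarith, ?_⟩
  calc u / (1 - A) * (1 - 700 * h)
      ≤ u / (1 - A) * ((1 - 600 * h) * (1 - 2 * h) * (1 - h) / (1 + 2 * h)) := by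
        gcongr
        rw [le_div_iff₀ (by linarith)]
        nlinarith [mul_nonneg h0 (sq_nonneg h), sq_nonneg h]
    _ = (1 - 600 * h) * (u * (1 - 2 * h) * ((1 - h) / ((1 - A) * (1 + 2 * h)))) := by field_simp
    _ ≤ (1 - 600 * h) * (u * i * ((1 - h) / (1 - A * i ^ 3))) := by gcongr

end GeometricPerturbation

section SaddlePoint

/-- The width around which the Durfee rectangles with difference of sides `l` concentrate at decay
rate `t`: the solution `x` of `e^{-tx} (1 + e^{-tl}) = 1`. -/
noncomputable def saddlePoint (t : ℝ) (l : ℕ) : ℝ :=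
  Real.log (1 + Real.exp (-t) ^ l) / t

variable {t : ℝ} {l N : ℕ}

lemma saddlePoint_nonneg (ht : 0 ≤ t) : 0 ≤ saddlePoint t l :=
  div_nonneg (Real.log_nonneg (by linarith [pow_pos (Real.exp_pos (-t)) l])) ht

lemma exp_neg_mul_saddlePoint (ht : 0 < t) :
    Real.exp (-(t * saddlePoint t l)) * (1 + Real.exp (-t) ^ l) = 1 := by
  rw [saddlePoint, mul_div_cancel₀ _ ht.ne', Real.exp_neg, Real.exp_log (by positivity)]
  exact inv_mul_cancel₀ (by positivity)

lemma decayRate_mul_twentiethRoot_pow (hN : 0 < twentiethRoot N) :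
    decayRate N * twentiethRoot N ^ 8 = γ * (1 / twentiethRoot N ^ 2) := by
  rw [decayRate]
  field_simp

lemma one_div_twentiethRoot_sq_le (hN : 1000 ≤ twentiethRoot N) :
    1 / twentiethRoot N ^ 2 ≤ 1 / 1000000 := by
  apply one_div_le_one_div_of_le (by norm_num)
  nlinarith

lemma exp_decayRate_mul_le (hN : 1000 ≤ twentiethRoot N) :
    Real.exp (decayRate N * twentiethRoot N ^ 8) ≤ 1 + 2 * (1 / twentiethRoot N ^ 2) := by
  rw [decayRate_mul_twentiethRoot_pow (by linarith)]
  have hsmall := one_div_twentiethRoot_sq_le hN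
  have hpos : 0 < 1 / twentiethRoot N ^ 2 := by positivity
  set h := 1 / twentiethRoot N ^ 2
  have hγ := partitionGrowth_pos
  have hle : γ * h ≤ 1.31 * h := by
    gcongr
    exact partitionGrowth_lt.le
  have hexp := Real.abs_exp_sub_one_sub_id_le (x := γ * h) <| by
    rw [abs_of_pos (by positivity)]
    linarith
  have hsq : (γ * h) ^ 2 ≤ (1.31 * h) ^ 2 := by gcongr
  nlinarith [(abs_le.1 hexp).2]

lemma inv_exp_decayRate_mul_le (hN : 1 ≤ twentiethRoot N) :
    (Real.exp (decayRate N * twentiethRoot N ^ 8))⁻¹ ≤ Real.exp (-decayRate N) := by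
  rw [← Real.exp_neg, Real.exp_le_exp, neg_le_neg_iff]
  exact le_mul_of_one_le_right (decayRate_pos (by linarith)).le (one_le_pow₀ hN)

lemma one_le_ceil_saddlePoint_sub_add (hN : 1000 ≤ twentiethRoot N) :
    1 ≤ ⌈saddlePoint (decayRate N) l - twentiethRoot N ^ 8⌉₊ + l := by
  rcases Nat.eq_zero_or_pos l with rfl | hl
  · have hwindow : twentiethRoot N ^ 8 < saddlePoint (decayRate N) 0 := by
      rw [saddlePoint, lt_div_iff₀ (decayRate_pos (by linarith)), mul_comm,
        decayRate_mul_twentiethRoot_pow (by linarith), pow_zero, one_add_one_eq_two]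
      calc γ * (1 / twentiethRoot N ^ 2) ≤ 1.31 * (1 / 1000000) := by
            exact mul_le_mul partitionGrowth_lt.le (one_div_twentiethRoot_sq_le hN)
              (by positivity) (by norm_num)
        _ < Real.log 2 := lt_trans (by norm_num) Real.log_two_gt_d9
    exact Nat.ceil_pos.2 (sub_pos.2 hwindow)
  · omega

lemma twentiethRoot_error_le (hN : 1000 ≤ twentiethRoot N) :
    (N + 1) / twentiethRoot N ^ 60 + (N + 1) * ((N + 1) * (1 / twentiethRoot N ^ 80)) ≤
      1 / twentiethRoot N ^ 2 := by
  have hN1 : (N : ℝ) + 1 ≤ 2 * twentiethRoot N ^ 20 := by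
    have hone : (1 : ℝ) ≤ N := by
      rw [← twentiethRoot_pow N]
      exact one_le_pow₀ (by linarith)
    rw [twentiethRoot_pow]
    linarith
  set Y := twentiethRoot N
  have _ : 0 < Y := by linarith
  calc ((N : ℝ) + 1) / Y ^ 60 + (N + 1) * ((N + 1) * (1 / Y ^ 80))
      ≤ 2 * Y ^ 20 / Y ^ 60 + 2 * Y ^ 20 * (2 * Y ^ 20 * (1 / Y ^ 80)) := by gcongr
    _ = 6 / Y ^ 38 * (1 / Y ^ 2) := by
      field_simp
      norm_num
    _ ≤ 1 * (1 / Y ^ 2) := by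
      gcongr
      rw [div_le_one (by positivity)]
      calc (6 : ℝ) ≤ Y := by linarith
        _ ≤ Y ^ 38 := le_self_pow₀ (by linarith) (by norm_num)
    _ = 1 / Y ^ 2 := one_mul _

variable {a : ℕ} (hN : 1000 ≤ twentiethRoot N)
  (hexp : 10 * twentiethRoot N ^ 100 ≤ Real.exp (twentiethRoot N))

include hN hexp

lemma durfeeCount_le_of_lt_or_lt
    (ha : a < ⌈saddlePoint (decayRate N) l - twentiethRoot N ^ 8⌉₊ ∨
      ⌊saddlePoint (decayRate N) l + twentiethRoot N ^ 8⌋₊ < a) :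
    ∀ n ≤ N, durfeeCount l a n ≤ numPartitions N * (1 / twentiethRoot N ^ 80) := by
  intro n hn
  have ht : 0 < decayRate N := decayRate_pos (by linarith)
  have hx0 := saddlePoint_nonneg (l := l) ht.le
  refine durfeeCount_le_of_far hN hexp hx0 (exp_neg_mul_saddlePoint ht) hn (le_abs.2 ?_)
  rcases ha with ha | ha
  · right
    linarith [Nat.lt_ceil.1 ha]
  · left
    linarith [(Nat.floor_lt (by positivity)).1 ha]

end SaddlePoint

section SaddlePointAsymptotics

open Finset

variable {l N : ℕ}

lemma exp_neg_pow_mem_Ioc {t : ℝ} (ht : 0 ≤ t) (l : ℕ) : Real.exp (-t) ^ l ∈ Set.Ioc 0 1 :=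
  ⟨by positivity, pow_le_one₀ (Real.exp_pos _).le (Real.exp_le_one_iff.2 (neg_nonpos.2 ht))⟩

lemma exp_neg_mul_ceil_le {t : ℝ} (ht : 0 ≤ t) (x d : ℝ) :
    Real.exp (-(t * ⌈x - d⌉₊)) ≤ Real.exp (-(t * x)) * Real.exp (t * d) := by
  rw [← Real.exp_add, Real.exp_le_exp]
  linarith [mul_le_mul_of_nonneg_left (Nat.le_ceil (x - d)) ht]

lemma le_exp_neg_mul_floor {t x d : ℝ} (ht : 0 ≤ t) (hxd : 0 ≤ x + d) :
    Real.exp (-(t * x)) / Real.exp (t * d) ≤ Real.exp (-(t * ⌊x + d⌋₊)) := by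
  rw [← Real.exp_sub, Real.exp_le_exp]
  linarith [mul_le_mul_of_nonneg_left (Nat.floor_le hxd) ht]

lemma half_le_one_add_div {w : ℝ} (hw : w ∈ Set.Ioc 0 1) :
    1 / 2 ≤ (1 + w) / (1 + w + w ^ 2) := by
  obtain ⟨hw0, hw1⟩ := hw
  rw [div_le_div_iff₀ (by norm_num) (by positivity)]
  nlinarith

variable (hN : 1000 ≤ twentiethRoot N)
  (hexp : 10 * twentiethRoot N ^ 100 ≤ Real.exp (twentiethRoot N))

include hN hexp

lemma sum_durfeeCountSub_le {w : ℝ} (hw : w = Real.exp (-decayRate N) ^ l) :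
    ∑ a ∈ range (N + 1), ∑ c ∈ range (N + 1), durfeeCountSub l a N (a + c * (2 * a + l + 1)) ≤
      numPartitions N * ((1 + w) / (1 + w + w ^ 2) * (1 + 700 * (1 / twentiethRoot N ^ 2))
        + 1 / twentiethRoot N ^ 2) := by
  have hp := (numPartitions_pos N).le
  have ht : 0 < decayRate N := decayRate_pos (by linarith)
  have hw0 : 0 < w := hw ▸ (exp_neg_pow_mem_Ioc ht.le l).1
  have hsaddle := exp_neg_mul_saddlePoint (l := l) ht
  rw [← hw] at hsaddle
  obtain ⟨hratio, hperturb⟩ := mul_div_one_sub_sq_mul_le (Real.exp_pos _) hw0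
    (sq_mul_le_quarter hsaddle) (by positivity) (one_div_twentiethRoot_sq_le hN)
    (Real.one_le_exp (by positivity)) (exp_decayRate_mul_le hN)
  rw [div_one_sub_sq_mul_eq hw0 hsaddle, mul_one_div 600] at hperturb
  have hgeom := sum_numPartitionsSub_le hN hexp
    (exp_neg_mul_ceil_le ht.le (saddlePoint (decayRate N) l) (twentiethRoot N ^ 8)) (hw ▸ hratio)
  rw [← hw] at hgeom
  have hfrozen := sum_durfeeCountSub_le_sum_numPartitionsSub (by positivity)
    (fun _ ha => durfeeCount_le_of_lt_or_lt hN hexp (Or.inl ha))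
    (one_le_ceil_saddlePoint_sub_add (l := l) hN)
  rw [sum_add_distrib, sum_const, card_range, nsmul_eq_mul, Nat.cast_add_one] at hfrozen
  linarith [mul_le_mul_of_nonneg_left hperturb hp,
    mul_le_mul_of_nonneg_left (twentiethRoot_error_le hN) hp]

lemma le_sum_durfeeCountSub {w : ℝ} (hw : w = Real.exp (-decayRate N) ^ l) :
    numPartitions N * ((1 + w) / (1 + w + w ^ 2) * (1 - 700 * (1 / twentiethRoot N ^ 2))
        - 1 / twentiethRoot N ^ 2) ≤
      ∑ a ∈ range (N + 1), ∑ c ∈ range (N + 1),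
        durfeeCountSub l a N (a + c * (2 * a + l + 1)) := by
  have hp := (numPartitions_pos N).le
  have ht : 0 < decayRate N := decayRate_pos (by linarith)
  have hw0 : 0 < w := hw ▸ (exp_neg_pow_mem_Ioc ht.le l).1
  have hsaddle := exp_neg_mul_saddlePoint (l := l) ht
  rw [← hw] at hsaddle
  obtain ⟨hratio, hperturb⟩ := le_div_div_one_sub_sq_mul (Real.exp_pos _) hw0
    (sq_mul_le_quarter hsaddle) (by positivity) (one_div_twentiethRoot_sq_le hN)
    (Real.one_le_exp (by positivity)) (exp_decayRate_mul_le hN)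
  rw [div_one_sub_sq_mul_eq hw0 hsaddle, mul_one_div 600] at hperturb
  have hx0 := saddlePoint_nonneg (l := l) ht.le
  have hgeom := le_sum_numPartitionsSub (l := l) hN hexp (by positivity)
    (le_exp_neg_mul_floor ht.le (add_nonneg hx0 (pow_nonneg (twentiethRoot_nonneg N) 8)))
    (by positivity) hratio
    (by
      rw [← hw]
      exact (div_eq_mul_inv _ _).trans_le <| mul_le_mul_of_nonneg_left
        (inv_exp_decayRate_mul_le (by linarith)) (by positivity))
  have hfrozen := sum_numPartitionsSub_le_sum_durfeeCountSub (by positivity)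
    (fun _ => durfeeCount_le_of_lt_or_lt hN hexp)
    (one_le_ceil_saddlePoint_sub_add (l := l) hN)
  rw [sum_sub_distrib, sum_const, card_range, nsmul_eq_mul, Nat.cast_add_one] at hfrozen
  linarith [mul_le_mul_of_nonneg_left hperturb hp,
    mul_le_mul_of_nonneg_left (twentiethRoot_error_le hN) hp]

lemma abs_sum_durfeeCountSub_sub_le {w : ℝ} (hw : w = Real.exp (-decayRate N) ^ l) :
    |∑ a ∈ range (N + 1), ∑ c ∈ range (N + 1), durfeeCountSub l a N (a + c * (2 * a + l + 1))
        - numPartitions N * ((1 + w) / (1 + w + w ^ 2))| ≤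
      1000 * (1 / twentiethRoot N ^ 2) * numPartitions N * ((1 + w) / (1 + w + w ^ 2)) := by
  have hupper := sum_durfeeCountSub_le hN hexp hw
  have hlower := le_sum_durfeeCountSub hN hexp hw
  have hhalf := half_le_one_add_div (hw ▸ exp_neg_pow_mem_Ioc (decayRate_pos (by linarith)).le l)
  have herror_pos : 0 ≤ numPartitions N * (1 / twentiethRoot N ^ 2) :=
    mul_nonneg (numPartitions_pos N).le (by positivity)
  set F := (1 + w) / (1 + w + w ^ 2)
  have habsorb := mul_le_mul_of_nonneg_left hhalf herror_pos
  rw [abs_le]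
  constructor <;> linarith [mul_nonneg herror_pos (show 0 ≤ F by linarith)]

end SaddlePointAsymptotics

section Parameters

open Filter

lemma eventually_twentiethRoot_large :
    ∀ᶠ N : ℕ in atTop, 1000 ≤ twentiethRoot N ∧
      10 * twentiethRoot N ^ 100 ≤ Real.exp (twentiethRoot N) := by
  have htendsto : Tendsto twentiethRoot atTop atTop :=
    (tendsto_rpow_atTop (by norm_num : (0 : ℝ) < 1 / 20)).comp tendsto_natCast_atTop_atTop
  filter_upwards [htendsto.eventually_ge_atTop 1000,
    htendsto.eventually ((Real.tendsto_exp_div_pow_atTop 100).eventually_ge_atTop 10)]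
    with N hlarge hexp
  exact ⟨hlarge, (le_div_iff₀ (by positivity)).1 hexp⟩

lemma partitionCount_natCast (N : ℕ) : (partitionCount N : ℝ) = numPartitions N := by
  simp [partitionCount, numPartitions]

lemma natCast_rpow_neg_one_tenth (N : ℕ) :
    (N : ℝ) ^ (-(1 / 10) : ℝ) = 1 / twentiethRoot N ^ 2 := by
  rw [twentiethRoot, ← Real.rpow_natCast, ← Real.rpow_mul N.cast_nonneg,
    Real.rpow_neg N.cast_nonneg, ← one_div]
  norm_num

lemma pi_mul_div_sqrt_eq_decayRate_mul (N l : ℕ) :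
    π * l / Real.sqrt (6 * N) = decayRate N * l := by
  have hsqrt : Real.sqrt (6 * N) = Real.sqrt 6 * twentiethRoot N ^ 10 := by
    rw [Real.sqrt_mul (by norm_num), ← twentiethRoot_pow N,
      show twentiethRoot N ^ 20 = (twentiethRoot N ^ 10) ^ 2 by ring,
      Real.sqrt_sq (pow_nonneg (twentiethRoot_nonneg N) _)]
  rw [hsqrt, decayRate, partitionGrowth]
  field_simp

lemma Frk_mul_natCast (t : ℝ) (l : ℕ) :
    Frk (t * l) =
      (1 + Real.exp (-t) ^ l) / (1 + Real.exp (-t) ^ l + (Real.exp (-t) ^ l) ^ 2) := by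
  simp only [Frk, ← Real.exp_nat_mul]
  push_cast
  ring_nf

end Parameters

theorem stmt_4 :
    ∃ C > (0 : ℝ), ∃ N₀ : ℕ, ∀ N : ℕ, N₀ ≤ N → ∀ ℓ : ℤ,
      |(Vd ℓ (N + ℓ.natAbs * (ℓ.natAbs + 1) / 2) : ℝ) -
          (partitionCount (N : ℤ) : ℝ) * Frk (π * |(ℓ : ℝ)| / Real.sqrt (6 * N))| ≤
        C * (N : ℝ) ^ (-(1 / 10) : ℝ) * (partitionCount (N : ℤ) : ℝ) *
          Frk (π * |(ℓ : ℝ)| / Real.sqrt (6 * N)) := by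
  obtain ⟨N₀, hN₀⟩ := Filter.eventually_atTop.1 eventually_twentiethRoot_large
  refine ⟨1000, by norm_num, N₀, fun N hN ℓ => ?_⟩
  obtain ⟨hlarge, hexp⟩ := hN₀ N hN
  have habs : |(ℓ : ℝ)| = ℓ.natAbs := by rw [Nat.cast_natAbs, Int.cast_abs]
  rw [Vd_eq_sum_durfeeCountSub, partitionCount_natCast, natCast_rpow_neg_one_tenth, habs,
    pi_mul_div_sqrt_eq_decayRate_mul, Frk_mul_natCast]
  exact abs_sum_durfeeCountSub_sub_le hlarge hexp rfl
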